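/- In the setting where W is uniform on {−1,1}^d, the sample X ∈ {−1,1}^d is obtained by passing each coordinate of W through BSC((1−δ)/2), and the processor sends a b-bit quantization of X over T uses of a DMC P_{V|U} with capacity C, let the distortion be the average bit error ℓ(w,ŵ) = (1/d) Σ_{j=1}^d 1{w_j ≠ ŵ_j} and R_B the corresponding Bayes risk. Then R_B ≥ h₂^{−1}( 1 − (1/d) min{ d(1 − h₂((1−δ)/2)) η_T, δ² b η_T, δ² C T } ), provided the argument of h₂^{−1} lies in [0,1]. Moreover, achieving R_B ≤ p requires the quantization rate to satisfy b/d ≥ (1 − h₂(p)) / (δ² η_T), where η_T = 1 − (1 − η(P_{V|U}))^T. -/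

import Mathlib

open MeasureTheory ProbabilityTheory Real

attribute [local instance] Classical.propDecidable
open scoped ENNReal NNReal

noncomputable section
namespace DecEst

variable {Ω α β γ : Type*}


/-- Kullback–Leibler divergence in bits. -/
def klDiv2 [MeasurableSpace α] (ν μ' : Measure α) : ℝ≥0∞ :=
  if ν ≪ μ' ∧ Integrable (fun x => Real.logb 2 ((ν.rnDeriv μ' x).toReal)) ν then
    ENNReal.ofReal (∫ x, Real.logb 2 ((ν.rnDeriv μ' x).toReal) ∂ν)
  else ⊤

/-- Mutual information (in bits) of a joint distribution. -/
def miM [MeasurableSpace α] [MeasurableSpace β] (pp : Measure (α × β)) : ℝ≥0∞ :=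
  klDiv2 pp ((pp.map Prod.fst).prod (pp.map Prod.snd))

/-- Mutual information (in bits) between two random variables. -/
def mi [MeasurableSpace Ω] [MeasurableSpace α] [MeasurableSpace β]
    (μ : Measure Ω) (X : Ω → α) (Y : Ω → β) : ℝ :=
  (miM (μ.map fun ω => (X ω, Y ω))).toReal

/-- SDPI constant of a channel `K` at input distribution `π`. -/
def eta [MeasurableSpace α] [MeasurableSpace β] (pp : Measure α) (K : Kernel α β) : ℝ≥0∞ :=
  ⨆ (ν : Measure α) (_ : IsProbabilityMeasure ν) (_ : ν ≠ pp),
    klDiv2 (ν.bind K) (pp.bind K) / klDiv2 ν pp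

/-- SDPI constant of a channel `K` (supremum over input distributions). -/
def etaMax [MeasurableSpace α] [MeasurableSpace β] (K : Kernel α β) : ℝ≥0∞ :=
  ⨆ (pp : Measure α) (_ : IsProbabilityMeasure pp), eta pp K

/-- Shannon capacity (in bits) of a channel. -/
def capacity [MeasurableSpace α] [MeasurableSpace β] (K : Kernel α β) [IsSFiniteKernel K] : ℝ :=
  ⨆ pp : ProbabilityMeasure α, (miM ((pp : Measure α) ⊗ₘ K)).toReal

/-- `T`-fold memoryless product of a channel. -/
def kernelPi [MeasurableSpace α] [MeasurableSpace β] [Countable α] [MeasurableSingletonClass α]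
    (T : ℕ) (K : Kernel α β) : Kernel (Fin T → α) (Fin T → β) where
  toFun u := Measure.pi fun t => K (u t)
  measurable' := measurable_of_countable _

/-- Bernoulli distribution on `Bool`. -/
def bern (p : ℝ) : Measure Bool :=
  (ENNReal.ofReal p) • Measure.dirac true + (ENNReal.ofReal (1 - p)) • Measure.dirac false

/-- Binary symmetric channel with crossover probability `ε`. -/
def bsc (ε : ℝ) : Kernel Bool Bool where
  toFun b := (ENNReal.ofReal ε) • Measure.dirac (!b) + (ENNReal.ofReal (1 - ε)) • Measure.dirac b
  measurable' := measurable_of_countable _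

/-- Binary entropy function (in bits). -/
def binEnt (p : ℝ) : ℝ := (Real.negMulLog p + Real.negMulLog (1 - p)) / Real.log 2

/-- Inverse of the binary entropy function on `[0, 1/2]`. -/
def binEntInv (y : ℝ) : ℝ := sSup {p : ℝ | p ∈ Set.Icc 0 (1 / 2) ∧ binEnt p ≤ y}


section finiteEntropy
variable {S : Type*} [Fintype S]

def Pr (p : S → ℝ) (f : S → α) (a : α) : ℝ := ∑ s, if f s = a then p s else 0

def Ent (p : S → ℝ) (f : S → α) : ℝ := -∑ s, p s * Real.log (Pr p f (f s))

def IsCh (p : S → ℝ) (C : S → α) (V : S → β) (k : α → β → ℝ) : Prop :=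
  ∀ c v, Pr p (fun s => (C s, V s)) (c, v) = Pr p C c * k c v

lemma Pr_nonneg {p : S → ℝ} (hp : ∀ s, 0 ≤ p s) (f : S → α) (a : α) : 0 ≤ Pr p f a :=
  Finset.sum_nonneg fun s _ => by split_ifs; exacts [hp s, le_rfl]

lemma sum_Pr [Fintype α] (p : S → ℝ) (f : S → α) (g : α → ℝ) :
    ∑ s, p s * g (f s) = ∑ a, Pr p f a * g a := by
  simp only [Pr, Finset.sum_mul]
  rw [Finset.sum_comm]
  refine Finset.sum_congr rfl fun s _ => ?_
  simp [ite_mul]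

lemma sum_Pr_one [Fintype α] (p : S → ℝ) (f : S → α) : ∑ a, Pr p f a = ∑ s, p s := by
  have := sum_Pr p f (fun _ => 1)
  simpa using this.symm

lemma Ent_eq [Fintype α] (p : S → ℝ) (f : S → α) :
    Ent p f = ∑ a, Real.negMulLog (Pr p f a) := by
  rw [Ent, sum_Pr p f (fun a => Real.log (Pr p f a)), ← Finset.sum_neg_distrib]
  simp [Real.negMulLog]

lemma Pr_comp [Fintype α] (p : S → ℝ) (f : S → α) (r : α → β) (b : β) :
    Pr p (fun s => r (f s)) b = ∑ a, if r a = b then Pr p f a else 0 := by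
  have := sum_Pr p f (fun a => if r a = b then 1 else 0)
  simpa [Pr] using this

lemma Pr_inj (p : S → ℝ) (f : S → α) (r : α → β) (hr : Function.Injective r) (a : α) :
    Pr p (fun s => r (f s)) (r a) = Pr p f a := by
  simp only [Pr, hr.eq_iff]

lemma Pr_marg [Fintype β] (p : S → ℝ) (f : S → α) (g : S → β) (a : α) :
    Pr p f a = ∑ b, Pr p (fun s => (f s, g s)) (a, b) := by
  simp only [Pr]
  rw [Finset.sum_comm]
  refine Finset.sum_congr rfl fun s _ => ?_
  by_cases h : f s = a <;> simp [h]

lemma Pr_marg' [Fintype β] (p : S → ℝ) (f : S → α) (g : S → β) (a : α) :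
    Pr p f a = ∑ b, Pr p (fun s => (g s, f s)) (b, a) := by
  simp only [Pr]
  rw [Finset.sum_comm]
  refine Finset.sum_congr rfl fun s _ => ?_
  by_cases h : f s = a <;> simp [h]

lemma Ent_congr (p : S → ℝ) (f : S → α) (g : S → β) (h : ∀ s s', f s = f s' ↔ g s = g s') :
    Ent p f = Ent p g := by
  simp only [Ent, Pr, h]

lemma Pr_mono {p : S → ℝ} (hp : ∀ s, 0 ≤ p s) (f : S → α) (g : S → β) (a : α) (b : β)
    (h : ∀ s, f s = a → g s = b) : Pr p f a ≤ Pr p g b := by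
  refine Finset.sum_le_sum fun s _ => ?_
  by_cases h1 : f s = a
  · simp [h1, h s h1]
  · simp only [h1, if_false]; split_ifs; exacts [hp s, le_rfl]

lemma Pr_pos {p : S → ℝ} (hp : ∀ s, 0 ≤ p s) (f : S → α) (s : S) (hs : 0 < p s) :
    0 < Pr p f (f s) := by
  refine lt_of_lt_of_le hs ?_
  have := Finset.single_le_sum (f := fun s' => if f s' = f s then p s' else 0)
    (fun i _ => by split_ifs; exacts [hp i, le_rfl]) (Finset.mem_univ s)
  simpa [Pr] using this

lemma submod [Fintype α] [Fintype β] [Fintype γ] {p : S → ℝ} (hp : ∀ s, 0 ≤ p s)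
    (A : S → α) (B : S → β) (C : S → γ) :
    Ent p (fun s => (A s, B s, C s)) + Ent p C ≤
      Ent p (fun s => (A s, C s)) + Ent p (fun s => (B s, C s)) := by
  have key : ∀ s, p s * (1 - Pr p (fun s => (A s, C s)) (A s, C s) *
        Pr p (fun s => (B s, C s)) (B s, C s) /
        (Pr p (fun s => (A s, B s, C s)) (A s, B s, C s) * Pr p C (C s))) ≤
      p s * (Real.log (Pr p (fun s => (A s, B s, C s)) (A s, B s, C s)) + Real.log (Pr p C (C s))
        - Real.log (Pr p (fun s => (A s, C s)) (A s, C s))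
        - Real.log (Pr p (fun s => (B s, C s)) (B s, C s))) := by
    intro s
    rcases (hp s).eq_or_lt with h | h
    · simp [← h]
    · have h1 := Pr_pos hp (fun s => (A s, B s, C s)) s h
      have h2 := Pr_pos hp C s h
      have h3 := Pr_pos hp (fun s => (A s, C s)) s h
      have h4 := Pr_pos hp (fun s => (B s, C s)) s h
      refine mul_le_mul_of_nonneg_left ?_ h.le
      have := Real.log_le_sub_one_of_pos (div_pos (mul_pos h3 h4) (mul_pos h1 h2))
      rw [Real.log_div (mul_pos h3 h4).ne' (mul_pos h1 h2).ne', Real.log_mul h3.ne' h4.ne',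
        Real.log_mul h1.ne' h2.ne'] at this
      linarith
  have hs := Finset.sum_le_sum fun s (_ : s ∈ Finset.univ) => key s
  have e1 : ∑ s, p s * (Real.log (Pr p (fun s => (A s, B s, C s)) (A s, B s, C s)) +
        Real.log (Pr p C (C s))
        - Real.log (Pr p (fun s => (A s, C s)) (A s, C s))
        - Real.log (Pr p (fun s => (B s, C s)) (B s, C s))) =
      Ent p (fun s => (A s, C s)) + Ent p (fun s => (B s, C s))
      - Ent p (fun s => (A s, B s, C s)) - Ent p C := by
    simp only [Ent, mul_sub, mul_add, Finset.sum_sub_distrib, Finset.sum_add_distrib]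
    ring
  rw [e1] at hs
  refine le_of_sub_nonneg (le_trans ?_ (hs.trans (by linarith)))
  have e2 : ∑ s, p s * (Pr p (fun s => (A s, C s)) (A s, C s) *
        Pr p (fun s => (B s, C s)) (B s, C s) /
        (Pr p (fun s => (A s, B s, C s)) (A s, B s, C s) * Pr p C (C s))) ≤ ∑ s, p s := by
    have := sum_Pr p (fun s => (A s, B s, C s)) (fun x => (Pr p (fun s => (A s, C s)) (x.1, x.2.2) *
        Pr p (fun s => (B s, C s)) (x.2.1, x.2.2) /
        (Pr p (fun s => (A s, B s, C s)) x * Pr p C (x.2.2))))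
    dsimp only at this
    rw [this]
    calc _ ≤ ∑ x : α × β × γ, (Pr p (fun s => (A s, C s)) (x.1, x.2.2) *
        Pr p (fun s => (B s, C s)) (x.2.1, x.2.2) / Pr p C (x.2.2)) := by
          refine Finset.sum_le_sum fun x _ => ?_
          have n1 := Pr_nonneg hp (fun s => (A s, B s, C s)) x
          have n2 := Pr_nonneg hp C x.2.2
          have n3 := Pr_nonneg hp (fun s => (A s, C s)) (x.1, x.2.2)
          have n4 := Pr_nonneg hp (fun s => (B s, C s)) (x.2.1, x.2.2)
          rcases n1.eq_or_lt with h | h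
          · rw [← h]; simp only [zero_mul]; positivity
          · rw [mul_div_assoc', mul_div_mul_left _ _ h.ne']
      _ = ∑ c, Pr p C c := by
          rw [Fintype.sum_prod_type, Finset.sum_congr rfl fun a _ => Fintype.sum_prod_type _]
          simp only
          rw [Finset.sum_congr rfl fun a _ => Finset.sum_comm, Finset.sum_comm]
          refine Finset.sum_congr rfl fun c _ => ?_
          simp only [← Finset.sum_div, ← Finset.mul_sum, ← Finset.sum_mul]
          rw [← Pr_marg' p C A c, ← Pr_marg' p C B c]
          by_cases h : Pr p C c = 0
          · simp [h]
          · field_simp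
      _ = ∑ s, p s := sum_Pr_one p C
  simp only [mul_sub, mul_one, Finset.sum_sub_distrib]
  linarith

lemma Ent_le_log_card [Fintype α] [Nonempty α] {p : S → ℝ} (hp : ∀ s, 0 ≤ p s)
    (h1 : ∑ s, p s = 1) (f : S → α) : Ent p f ≤ Real.log (Fintype.card α) := by
  have hc : (0:ℝ) < Fintype.card α := by exact_mod_cast Fintype.card_pos
  have key : ∀ a, Real.negMulLog (Pr p f a) ≤ Pr p f a * Real.log (Fintype.card α)
      + ((Fintype.card α : ℝ)⁻¹ - Pr p f a) := by
    intro a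
    rcases (Pr_nonneg hp f a).eq_or_lt with h | h
    · rw [← h]; simp
    · have := Real.log_le_sub_one_of_pos (inv_pos.2 (mul_pos h hc))
      rw [Real.log_inv, Real.log_mul h.ne' hc.ne'] at this
      have h2 := mul_le_mul_of_nonneg_left this h.le
      have h3 : Pr p f a * ((Pr p f a * (Fintype.card α : ℝ))⁻¹ - 1)
        = (Fintype.card α : ℝ)⁻¹ - Pr p f a := by field_simp
      rw [h3] at h2
      simp only [Real.negMulLog]; linarith
  rw [Ent_eq]
  refine (Finset.sum_le_sum fun a _ => key a).trans ?_
  rw [Finset.sum_add_distrib, ← Finset.sum_mul, Finset.sum_sub_distrib, sum_Pr_one, h1]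
  simp [hc.ne']

lemma Ent_const {p : S → ℝ} (h1 : ∑ s, p s = 1) (f : S → α) (h : ∀ s s', f s = f s') :
    Ent p f = 0 := by
  have : ∀ s, Pr p f (f s) = 1 := fun s => by simp [Pr, h _ s, h1]
  simp [Ent, this]

lemma IsCh.coarsen [Fintype α] [Fintype β] {p : S → ℝ} {C : S → α} {V : S → β} {k : α → β → ℝ}
    (h : IsCh p C V k) (r : α → γ) (k' : γ → β → ℝ) (hk : ∀ c v, k c v = k' (r c) v) :
    IsCh p (fun s => r (C s)) V k' := by
  intro c v
  have e := Pr_comp p (fun s => (C s, V s)) (fun x => (r x.1, x.2)) (c, v)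
  dsimp only at e
  rw [e, Pr_comp, Fintype.sum_prod_type, Finset.sum_mul]
  refine Finset.sum_congr rfl fun a _ => ?_
  by_cases ha : r a = c
  · subst ha; simp [h a v, hk]
  · simp [ha]

/-- coarsening the output -/
lemma IsCh.post [Fintype α] [Fintype β] {p : S → ℝ} {C : S → α} {V : S → β} {k : α → β → ℝ}
    (h : IsCh p C V k) (r : β → γ) :
    IsCh p C (fun s => r (V s)) (fun c w => ∑ v, if r v = w then k c v else 0) := by
  intro c w
  have e := Pr_comp p (fun s => (C s, V s)) (fun x => (x.1, r x.2)) (c, w)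
  dsimp only at e
  rw [e, Fintype.sum_prod_type, Finset.sum_eq_single c]
  · simp only [Finset.mul_sum, Prod.mk.injEq, true_and, h c, mul_ite, mul_zero]
  · intro b _ hb; simp [hb]
  · simp

lemma IsCh.ent [Fintype α] [Fintype β] {p : S → ℝ} {C : S → α} {V : S → β} {k : α → β → ℝ}
    (h : IsCh p C V k) (hk : ∀ c, ∑ v, k c v = 1) :
    Ent p (fun s => (C s, V s)) = Ent p C + ∑ s, p s * ∑ v, Real.negMulLog (k (C s) v) := by
  rw [Ent_eq, Fintype.sum_prod_type, Ent_eq, sum_Pr p C (fun c => ∑ v, Real.negMulLog (k c v)),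
    ← Finset.sum_add_distrib]
  refine Finset.sum_congr rfl fun c _ => ?_
  simp only [h c, Real.negMulLog_mul, Finset.sum_add_distrib, ← Finset.sum_mul, hk,
    ← Finset.mul_sum, one_mul]

end finiteEntropy

section gerber

lemma gerber_series {x : ℝ} (hx : |x| < 1) :
    HasSum (fun k : ℕ => x ^ (2 * k + 2) * (1 / (2 * k + 1) - 1 / (2 * k + 2) : ℝ))
      (Real.log 2 - Real.binEntropy ((1 - x) / 2)) := by
  have hx' := abs_lt.1 hx
  have h1 := Real.hasSum_log_sub_log_of_abs_lt_one hx
  have hx2 : |x ^ 2| < 1 := by rw [abs_pow]; exact pow_lt_one₀ (abs_nonneg _) hx (by norm_num)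
  have h2 := Real.hasSum_pow_div_log_of_abs_lt_one hx2
  have h3 := ((h1.mul_left x).sub h2).mul_left (1 / 2)
  convert h3 using 1
  · rfl
  · ext k
    have : (2 * (k:ℝ) + 1) ≠ 0 := by positivity
    have : ((k:ℝ) + 1) ≠ 0 := by positivity
    have : (2 * (k:ℝ) + 2) ≠ 0 := by positivity
    field_simp
    ring_nf
  · rw [Real.binEntropy_eq_negMulLog_add_negMulLog_one_sub]
    have e1 : 1 - (1 - x) / 2 = (1 + x) / 2 := by ring
    have p1 : (0:ℝ) < 1 - x := by linarith
    have p2 : (0:ℝ) < 1 + x := by linarith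
    have e2 : 1 - x ^ 2 = (1 - x) * (1 + x) := by ring
    rw [e1, e2]
    simp only [Real.negMulLog]
    rw [Real.log_div p1.ne' (by norm_num), Real.log_div p2.ne' (by norm_num),
      Real.log_mul p1.ne' p2.ne']
    ring

lemma gerber_open {x δ : ℝ} (hx : |x| < 1) (h0 : 0 ≤ δ) (h1 : δ ≤ 1) :
    Real.log 2 - Real.binEntropy ((1 - δ * x) / 2) ≤
      δ ^ 2 * (Real.log 2 - Real.binEntropy ((1 - x) / 2)) := by
  have hdx : |δ * x| < 1 := by
    rw [abs_mul, abs_of_nonneg h0]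
    exact lt_of_le_of_lt (mul_le_of_le_one_left (abs_nonneg _) h1) hx
  refine hasSum_le (fun k => ?_) (gerber_series hdx) ((gerber_series hx).mul_left _)
  have hc : (0:ℝ) ≤ 1 / (2 * k + 1) - 1 / (2 * k + 2) := by
    rw [sub_nonneg]
    exact one_div_le_one_div_of_le (by positivity) (by linarith)
  have hxp : 0 ≤ x ^ (2 * k + 2) := (Even.pow_nonneg (by use k + 1; ring) x)
  rw [mul_pow, ← mul_assoc]
  refine mul_le_mul_of_nonneg_right (mul_le_mul_of_nonneg_right ?_ hxp) hc
  exact pow_le_pow_of_le_one h0 h1 (by omega)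

lemma gerber {x δ : ℝ} (hx : x ∈ Set.Icc (-1 : ℝ) 1) (h0 : 0 ≤ δ) (h1 : δ ≤ 1) :
    Real.log 2 - Real.binEntropy ((1 - δ * x) / 2) ≤
      δ ^ 2 * (Real.log 2 - Real.binEntropy ((1 - x) / 2)) := by
  have hcl : IsClosed {x : ℝ | Real.log 2 - Real.binEntropy ((1 - δ * x) / 2) ≤
      δ ^ 2 * (Real.log 2 - Real.binEntropy ((1 - x) / 2))} := by
    apply isClosed_le <;> fun_prop
  have hs : Set.Ioo (-1 : ℝ) 1 ⊆ {x : ℝ | Real.log 2 - Real.binEntropy ((1 - δ * x) / 2) ≤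
      δ ^ 2 * (Real.log 2 - Real.binEntropy ((1 - x) / 2))} :=
    fun y hy => gerber_open (abs_lt.2 hy) h0 h1
  have := hcl.closure_subset_iff.2 hs
  rw [closure_Ioo (by norm_num)] at this
  exact this hx

end gerber

section KL
variable {S υ : Type*} [Fintype S]

def KLf [Fintype α] (ν m : α → ℝ) : ℝ := ∑ u, ν u * (Real.log (ν u) - Real.log (m u))

def push [Fintype α] (k : α → β → ℝ) (ν : α → ℝ) (v : β) : ℝ := ∑ u, ν u * k u v

lemma condMI_eq [Fintype α] [Fintype β] [Fintype γ] {p : S → ℝ} (hp : ∀ s, 0 ≤ p s)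
    (A : S → α) (C : S → γ) (V : S → β) :
    Ent p (fun s => (A s, C s)) + Ent p (fun s => (C s, V s))
      - Ent p (fun s => ((A s, C s), V s)) - Ent p C =
    ∑ x : α × γ, Pr p (fun s => (A s, C s)) x *
      KLf (fun v => Pr p (fun s => ((A s, C s), V s)) (x, v) / Pr p (fun s => (A s, C s)) x)
        (fun v => Pr p (fun s => (C s, V s)) (x.2, v) / Pr p C x.2) := by
  have h := sum_Pr p (fun s => ((A s, C s), V s)) (fun y =>
    Real.log (Pr p (fun s => ((A s, C s), V s)) y) + Real.log (Pr p C y.1.2)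
    - Real.log (Pr p (fun s => (A s, C s)) y.1) - Real.log (Pr p (fun s => (C s, V s)) (y.1.2, y.2)))
  have e : Ent p (fun s => (A s, C s)) + Ent p (fun s => (C s, V s))
      - Ent p (fun s => ((A s, C s), V s)) - Ent p C = ∑ s, p s * (
    Real.log (Pr p (fun s => ((A s, C s), V s)) ((A s, C s), V s)) + Real.log (Pr p C (C s))
    - Real.log (Pr p (fun s => (A s, C s)) (A s, C s))
    - Real.log (Pr p (fun s => (C s, V s)) (C s, V s))) := by
    simp only [Ent, mul_sub, mul_add, Finset.sum_sub_distrib, Finset.sum_add_distrib]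
    ring
  rw [e, h, Fintype.sum_prod_type]
  refine Finset.sum_congr rfl fun x _ => ?_
  rw [KLf, Finset.mul_sum]
  refine Finset.sum_congr rfl fun v _ => ?_
  rcases (Pr_nonneg hp (fun s => ((A s, C s), V s)) (x, v)).eq_or_lt with h | h
  · simp [← h]
  · have h2 : 0 < Pr p (fun s => (A s, C s)) x :=
      h.trans_le (Pr_mono hp _ _ _ _ fun s hs => by simp at hs; exact hs.1)
    have h3 : 0 < Pr p (fun s => (C s, V s)) (x.2, v) :=
      h.trans_le (Pr_mono hp _ _ _ _ fun s hs => by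
        simp only [Prod.mk.injEq] at hs ⊢; exact ⟨by rw [← hs.1], hs.2⟩)
    have h4 : 0 < Pr p C x.2 := h3.trans_le (Pr_mono hp _ _ _ _ fun s hs => by simp at hs; exact hs.1)
    rw [Real.log_div h.ne' h2.ne', Real.log_div h3.ne' h4.ne', ← mul_assoc,
      mul_div_cancel₀ _ h2.ne']
    ring

lemma cond_eq_push [Fintype α] [Fintype β] [Fintype υ] {p : S → ℝ}
    (C : S → α) (U : S → υ) (V : S → β) (k : υ → β → ℝ)
    (h : IsCh p (fun s => (C s, U s)) V (fun c v => k c.2 v)) (c : α) :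
    (fun v => Pr p (fun s => (C s, V s)) (c, v) / Pr p C c) =
      push k (fun u => Pr p (fun s => (C s, U s)) (c, u) / Pr p C c) := by
  ext v
  have := Pr_marg p (fun s => (C s, V s)) U (c, v)
  rw [this, push, Finset.sum_div]
  refine Finset.sum_congr rfl fun u _ => ?_
  have h' := h (c, u) v
  have e : Pr p (fun s => ((C s, V s), U s)) ((c, v), u)
      = Pr p (fun s => ((C s, U s), V s)) ((c, u), v) := by
    simp only [Pr, Prod.mk.injEq]
    refine Finset.sum_congr rfl fun s _ => ?_
    congr 1
    exact propext (by tauto)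
  rw [e, h']
  ring

def SDPI [Fintype υ] [Fintype β] (k : υ → β → ℝ) (η : ℝ) : Prop :=
  ∀ ν m : υ → ℝ, (∀ u, 0 ≤ ν u) → (∀ u, 0 ≤ m u) → ∑ u, ν u = 1 → ∑ u, m u = 1 →
    (∀ u, m u = 0 → ν u = 0) → KLf (push k ν) (push k m) ≤ η * KLf ν m

lemma cond_sum [Fintype υ] {p : S → ℝ} (C : S → α) (U : S → υ) (c : α) (hc : Pr p C c ≠ 0) :
    ∑ u, Pr p (fun s => (C s, U s)) (c, u) / Pr p C c = 1 := by
  rw [← Finset.sum_div, ← Pr_marg, div_self hc]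

lemma condSDPI [Fintype α] [Fintype β] [Fintype γ] [Fintype υ] {p : S → ℝ} (hp : ∀ s, 0 ≤ p s)
    (A : S → α) (C : S → γ) (U : S → υ) (V : S → β) (k : υ → β → ℝ) (η : ℝ)
    (hη : SDPI k η)
    (h : IsCh p (fun s => ((A s, C s), U s)) V (fun c v => k c.2 v)) :
    Ent p (fun s => (A s, C s)) + Ent p (fun s => (C s, V s))
      - Ent p (fun s => ((A s, C s), V s)) - Ent p C ≤
    η * (Ent p (fun s => (A s, C s)) + Ent p (fun s => (C s, U s))
      - Ent p (fun s => ((A s, C s), U s)) - Ent p C) := by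
  have h' : IsCh p (fun s => (C s, U s)) V (fun c v => k c.2 v) :=
    h.coarsen (fun x => (x.1.2, x.2)) _ (fun _ _ => rfl)
  rw [condMI_eq hp, condMI_eq hp, Finset.mul_sum]
  refine Finset.sum_le_sum fun x _ => ?_
  rcases (Pr_nonneg hp (fun s => (A s, C s)) x).eq_or_lt with h0 | h0
  · simp [← h0]
  have h4 : 0 < Pr p C x.2 := h0.trans_le (Pr_mono hp _ _ _ _ fun s hs => by rw [← hs])
  rw [cond_eq_push _ _ _ _ h x, cond_eq_push _ _ _ _ h' x.2]
  have := hη (fun u => Pr p (fun s => ((A s, C s), U s)) (x, u) / Pr p (fun s => (A s, C s)) x)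
    (fun u => Pr p (fun s => (C s, U s)) (x.2, u) / Pr p C x.2)
    (fun u => div_nonneg (Pr_nonneg hp _ _) (Pr_nonneg hp _ _))
    (fun u => div_nonneg (Pr_nonneg hp _ _) (Pr_nonneg hp _ _))
    (cond_sum _ _ _ h0.ne') (cond_sum _ _ _ h4.ne') (by
      intro u hu
      rw [div_eq_zero_iff, or_iff_left h4.ne'] at hu
      rw [div_eq_zero_iff]
      left
      refine le_antisymm ?_ (Pr_nonneg hp _ _)
      rw [← hu]
      exact Pr_mono hp _ _ _ _ fun s hs => by
        simp only [Prod.mk.injEq] at hs ⊢; exact ⟨by rw [← hs.1], hs.2⟩)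
  calc _ ≤ _ := mul_le_mul_of_nonneg_left this h0.le
    _ = _ := by ring

def CapB [Fintype υ] [Fintype β] (k : υ → β → ℝ) (c : ℝ) : Prop :=
  ∀ m : υ → ℝ, (∀ u, 0 ≤ m u) → ∑ u, m u = 1 → ∑ u, m u * KLf (k u) (push k m) ≤ c

lemma condCap [Fintype β] [Fintype γ] [Fintype υ] {p : S → ℝ} (hp : ∀ s, 0 ≤ p s)
    (h1 : ∑ s, p s = 1) (C : S → γ) (U : S → υ) (V : S → β) (k : υ → β → ℝ) (cap : ℝ)
    (hcap : CapB k cap)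
    (h : IsCh p (fun s => (C s, U s)) V (fun c v => k c.2 v)) :
    Ent p (fun s => (U s, C s)) + Ent p (fun s => (C s, V s))
      - Ent p (fun s => ((U s, C s), V s)) - Ent p C ≤ cap := by
  have h' : IsCh p (fun s => (U s, C s)) V (fun c v => k c.1 v) :=
    h.coarsen (fun x => (x.2, x.1)) _ (fun _ _ => rfl)
  rw [condMI_eq hp, Fintype.sum_prod_type, Finset.sum_comm]
  have : cap = ∑ c, Pr p C c * cap := by rw [← Finset.sum_mul, sum_Pr_one, h1, one_mul]
  rw [this]
  refine Finset.sum_le_sum fun c _ => ?_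
  dsimp only
  have sw : ∀ u, Pr p (fun s => (C s, U s)) (c, u) = Pr p (fun s => (U s, C s)) (u, c) := fun u => by
    simp only [Pr, Prod.mk.injEq, and_comm]
  rcases (Pr_nonneg hp C c).eq_or_lt with h0 | h0
  · rw [← h0, zero_mul]
    refine le_of_eq (Finset.sum_eq_zero fun u _ => ?_)
    have : Pr p (fun s => (U s, C s)) (u, c) = 0 := by
      refine le_antisymm ?_ (Pr_nonneg hp _ _)
      rw [h0]
      exact Pr_mono hp _ _ _ _ fun s hs => by simp at hs; exact hs.2
    rw [this, zero_mul]
  rw [cond_eq_push _ _ _ _ h c]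
  have := hcap (fun u => Pr p (fun s => (C s, U s)) (c, u) / Pr p C c)
    (fun u => div_nonneg (Pr_nonneg hp _ _) (Pr_nonneg hp _ _)) (cond_sum _ _ _ h0.ne')
  refine le_trans (le_of_eq ?_) (mul_le_mul_of_nonneg_left this h0.le)
  rw [Finset.mul_sum]
  refine Finset.sum_congr rfl fun u _ => ?_
  rw [← mul_assoc, mul_div_cancel₀ _ h0.ne', sw]
  by_cases hu : Pr p (fun s => (U s, C s)) (u, c) = 0
  · simp [hu]
  · congr 2
    ext v
    rw [h' (u, c) v, mul_div_cancel_left₀ _ hu]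

def bscR (ε : ℝ) (x w : Bool) : ℝ := if w = x then 1 - ε else ε

lemma boolEnt [Fintype γ] {p : S → ℝ} (hp : ∀ s, 0 ≤ p s) (C : S → γ) (X : S → Bool) :
    Ent p (fun s => (C s, X s)) = Ent p C +
      ∑ c, Pr p C c * Real.binEntropy (Pr p (fun s => (C s, X s)) (c, true) / Pr p C c) := by
  have h : IsCh p C X (fun c v => if v = true then Pr p (fun s => (C s, X s)) (c, true) / Pr p C c
      else 1 - Pr p (fun s => (C s, X s)) (c, true) / Pr p C c) := by
    intro c v
    have hm := Pr_marg p C X c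
    simp only [Fintype.sum_bool] at hm
    have n1 := Pr_nonneg hp (fun s => (C s, X s)) (c, true)
    have n2 := Pr_nonneg hp (fun s => (C s, X s)) (c, false)
    by_cases h0 : Pr p C c = 0
    · cases v <;> rw [h0] <;> simp <;> linarith
    · cases v
      · simp; field_simp; linarith
      · simp; field_simp
  rw [h.ent (fun c => by simp)]
  congr 1
  rw [sum_Pr p C (fun c => ∑ v, Real.negMulLog (if v = true then
    Pr p (fun s => (C s, X s)) (c, true) / Pr p C c
      else 1 - Pr p (fun s => (C s, X s)) (c, true) / Pr p C c))]
  refine Finset.sum_congr rfl fun c _ => ?_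
  simp [Real.binEntropy_eq_negMulLog_add_negMulLog_one_sub]

lemma gerberRV [Fintype γ] {p : S → ℝ} (hp : ∀ s, 0 ≤ p s)
    (h1 : ∑ s, p s = 1) (C : S → γ) (X W : S → Bool) {δ : ℝ} (hδ0 : 0 ≤ δ) (hδ1 : δ ≤ 1)
    (h : IsCh p (fun s => (C s, X s)) W (fun c v => bscR ((1 - δ) / 2) c.2 v)) :
    Real.log 2 - (Ent p (fun s => (C s, W s)) - Ent p C) ≤
      δ ^ 2 * (Real.log 2 - (Ent p (fun s => (C s, X s)) - Ent p C)) := by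
  rw [boolEnt hp C X, boolEnt hp C W, add_sub_cancel_left, add_sub_cancel_left]
  have hl : Real.log 2 = ∑ c, Pr p C c * Real.log 2 := by
    rw [← Finset.sum_mul, sum_Pr_one, h1, one_mul]
  rw [hl, ← Finset.sum_sub_distrib, ← Finset.sum_sub_distrib, Finset.mul_sum]
  refine Finset.sum_le_sum fun c _ => ?_
  rw [← mul_sub, ← mul_sub, mul_left_comm]
  rcases (Pr_nonneg hp C c).eq_or_lt with h0 | h0
  · simp [← h0]
  refine mul_le_mul_of_nonneg_left ?_ h0.le
  set q := Pr p (fun s => (C s, X s)) (c, true) / Pr p C c with hq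
  have hs := cond_sum C X c h0.ne'
  rw [Fintype.sum_bool, ← hq] at hs
  have hq0 : 0 ≤ q := div_nonneg (Pr_nonneg hp _ _) h0.le
  have hq1 : 0 ≤ Pr p (fun s => (C s, X s)) (c, false) / Pr p C c :=
    div_nonneg (Pr_nonneg hp _ _) h0.le
  have := congrFun (cond_eq_push C X W _ h c) true
  rw [this]
  have e : push (bscR ((1 - δ) / 2)) (fun u => Pr p (fun s => (C s, X s)) (c, u) / Pr p C c) true
      = (1 - δ * (1 - 2 * q)) / 2 := by
    simp only [push, Fintype.sum_bool, ← hq, bscR]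
    rw [← eq_sub_iff_add_eq'] at hs
    rw [hs]; simp; ring
  have e2 : q = (1 - (1 - 2 * q)) / 2 := by ring
  rw [e]
  conv_rhs => rw [e2]
  exact gerber ⟨by linarith, by linarith⟩ hδ0 hδ1

end KL

section core
variable {S ξ : Type*} [Fintype S]

def mask {d : ℕ} (j : ℕ) (w : Fin d → Bool) : Fin d → Bool := fun i => if i.val < j then w i else false

lemma mask_zero {d : ℕ} (w : Fin d → Bool) : mask 0 w = fun _ => false := by ext; simp [mask]

lemma mask_all {d : ℕ} (w : Fin d → Bool) : mask d w = w := by ext i; simp [mask]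

lemma mask_succ_iff {d j : ℕ} (hj : j < d) (w w' : Fin d → Bool) :
    mask (j + 1) w = mask (j + 1) w' ↔ mask j w = mask j w' ∧ w ⟨j, hj⟩ = w' ⟨j, hj⟩ := by
  constructor
  · intro h
    refine ⟨?_, ?_⟩
    · funext i
      have := congrFun h i
      simp only [mask] at this ⊢
      by_cases hi : i.val < j
      · simpa [hi, Nat.lt_succ_of_lt hi] using this
      · simp [hi]
    · have := congrFun h ⟨j, hj⟩
      simpa [mask] using this
  · rintro ⟨h1, h2⟩
    funext i
    have := congrFun h1 i
    simp only [mask] at this ⊢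
    rcases lt_trichotomy i.val j with hi | hi | hi
    · simpa [hi, Nat.lt_succ_of_lt hi] using this
    · have : i = ⟨j, hj⟩ := Fin.ext hi
      subst this; simpa using h2
    · have : ¬ i.val < j + 1 := by omega
      simp [this]

def kM {d : ℕ} (ε : ℝ) (j : ℕ) (x w : Fin d → Bool) : ℝ :=
  ∏ i, if i.val < j then bscR ε (x i) (w i) else (if w i = false then 1 else 0)

lemma kM_mask {d : ℕ} (ε : ℝ) {j j' : ℕ} (h : j ≤ j') (x w : Fin d → Bool) :
    kM ε j (mask j' x) w = kM ε j x w := by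
  refine Finset.prod_congr rfl fun i _ => ?_
  by_cases hi : i.val < j
  · have : i.val < j' := by omega
    simp [hi, mask, this]
  · simp [hi]

lemma sum_pi {d : ℕ} (R : Fin d → Bool → Prop) (f : Fin d → Bool → ℝ) :
    (∑ w : Fin d → Bool, if (∀ i, R i (w i)) then ∏ i, f i (w i) else 0) =
      ∏ i, ∑ b, if R i b then f i b else 0 := by
  rw [Fintype.prod_sum]
  refine Finset.sum_congr rfl fun w _ => ?_
  rw [Finset.prod_ite_zero]
  simp

lemma bscR_sum (ε : ℝ) (x : Bool) : ∑ b, bscR ε x b = 1 := by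
  cases x <;> simp [bscR]

lemma kM_sum {d : ℕ} (ε : ℝ) (j : ℕ) (x : Fin d → Bool) : ∑ w, kM ε j x w = 1 := by
  have := Fintype.prod_sum (fun (i : Fin d) (b : Bool) =>
    if i.val < j then bscR ε (x i) b else (if b = false then (1:ℝ) else 0))
  simp only [kM]
  rw [← this]
  refine Finset.prod_eq_one fun i _ => ?_
  by_cases hi : i.val < j
  · simp only [hi, if_true, bscR_sum]
  · simp [hi]

lemma maskCh [Fintype ξ] {d : ℕ} {p : S → ℝ} {ε : ℝ} (D : S → ξ) (xx : ξ → Fin d → Bool)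
    (W : S → Fin d → Bool)
    (hB : IsCh p D W (fun c w => ∏ i, bscR ε (xx c i) (w i))) (j : ℕ) :
    IsCh p D (fun s => mask j (W s)) (fun c => kM ε j (xx c)) := by
  convert hB.post (mask j) using 2 with c
  ext w'
  have := sum_pi (fun i b => (if i.val < j then b else false) = w' i) (fun i b => bscR ε (xx c i) b)
  simp only [funext_iff, mask] at this ⊢
  symm
  refine Eq.trans (Eq.trans (Finset.sum_congr rfl fun w _ => by congr) this) ?_
  symm
  rw [kM]
  refine Finset.prod_congr rfl fun i _ => ?_
  by_cases hi : i.val < j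
  · simp [hi]
  · have := bscR_sum ε (xx c i)
    simp only [hi, if_false]
    by_cases hw : w' i = false
    · simp only [hw, if_true, this]
    · simp [hw]

lemma stepCh [Fintype ξ] {d : ℕ} {p : S → ℝ} {ε : ℝ} (D : S → ξ) (xx : ξ → Fin d → Bool)
    (W : S → Fin d → Bool)
    (hB : IsCh p D W (fun c w => ∏ i, bscR ε (xx c i) (w i))) (j : ℕ) (hj : j < d) :
    IsCh p (fun s => (D s, mask j (W s))) (fun s => W s ⟨j, hj⟩)
      (fun c b => bscR ε (xx c.1 ⟨j, hj⟩) b) := by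
  rintro ⟨c, w'⟩ b
  have h1 := hB.post (fun w => (mask j w, w ⟨j, hj⟩)) c (w', b)
  have h2 := maskCh D xx W hB j c w'
  have e : Pr p (fun s => ((D s, mask j (W s)), W s ⟨j, hj⟩)) ((c, w'), b) =
      Pr p (fun s => (D s, (mask j (W s), W s ⟨j, hj⟩))) (c, (w', b)) := by
    simp only [Pr, Prod.mk.injEq, and_assoc]
  rw [e, h1, h2, mul_assoc]
  congr 1
  have := sum_pi (fun i b' => (if i.val < j then b' else false) = w' i ∧
    (i = ⟨j, hj⟩ → b' = b)) (fun i b => bscR ε (xx c i) b)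
  have e2 : ∀ w : Fin d → Bool, ((mask j w, w ⟨j, hj⟩) = (w', b)) ↔
      ∀ i, (if i.val < j then w i else false) = w' i ∧ (i = ⟨j, hj⟩ → w i = b) := by
    intro w
    simp only [Prod.mk.injEq, funext_iff, mask, forall_and, forall_eq]
  simp only [e2]
  refine Eq.trans (Eq.trans (Finset.sum_congr rfl fun w _ => by congr) this) ?_
  rw [kM]
  have e3 : bscR ε (xx c ⟨j, hj⟩) b =
      ∏ i : Fin d, if i = ⟨j, hj⟩ then bscR ε (xx c i) b else 1 := by
    rw [Finset.prod_ite_eq' Finset.univ (⟨j, hj⟩ : Fin d) (fun i => bscR ε (xx c i) b)]; simp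
  rw [e3, ← Finset.prod_mul_distrib]
  refine Finset.prod_congr rfl fun i _ => ?_
  by_cases hi : i = ⟨j, hj⟩
  · subst hi
    simp only [lt_irrefl, if_false, true_imp_iff, if_true]
    by_cases hw : w' ⟨j, hj⟩ = false
    · simp [hw]
    · simp [hw]
  · simp only [hi, if_false, false_imp_iff, and_true, mul_one]
    by_cases hi : i.val < j
    · simp [hi]
    · have := bscR_sum ε (xx c i)
      simp only [hi, if_false]
      by_cases hw : w' i = false
      · simp only [hw, if_true, this]
      · simp [hw]

lemma entBSC [Fintype ξ] {d : ℕ} {p : S → ℝ} (h1 : ∑ s, p s = 1) {ε : ℝ}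
    (D : S → ξ) (xx : ξ → Fin d → Bool) (W : S → Fin d → Bool)
    (hB : IsCh p D W (fun c w => ∏ i, bscR ε (xx c i) (w i))) :
    Ent p (fun s => (D s, W s)) = Ent p D + d * Real.binEntropy ε := by
  have : ∀ j, j ≤ d → Ent p (fun s => (D s, mask j (W s))) = Ent p D + j * Real.binEntropy ε := by
    intro j
    induction j with
    | zero =>
      intro _
      simp only [mask_zero, Nat.cast_zero, zero_mul, add_zero]
      exact Ent_congr _ _ _ (by simp)
    | succ j ih =>
      intro hj
      have h := (stepCh D xx W hB j hj).ent (fun c => bscR_sum _ _)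
      have e : ∀ x : Bool, ∑ v, Real.negMulLog (bscR ε x v) = Real.binEntropy ε := by
        intro x
        rw [Real.binEntropy_eq_negMulLog_add_negMulLog_one_sub]
        cases x <;> simp [bscR, add_comm]
      simp only [e, ← Finset.sum_mul, h1, one_mul] at h
      rw [ih (by omega)] at h
      have e2 : Ent p (fun s => (D s, mask (j+1) (W s))) =
        Ent p (fun s => ((D s, mask j (W s)), W s ⟨j, hj⟩)) :=
        Ent_congr _ _ _ (by intro s s'; simp only [Prod.mk.injEq, mask_succ_iff hj]; tauto)
      rw [e2, h]; push_cast; ring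
  have := this d le_rfl
  simpa only [mask_all] using this

lemma contraction [Fintype ξ] {d : ℕ} {p : S → ℝ} (hp : ∀ s, 0 ≤ p s) (h1 : ∑ s, p s = 1)
    {δ : ℝ} (hδ0 : 0 ≤ δ) (hδ1 : δ ≤ 1)
    (E : S → ξ) (X W : S → Fin d → Bool)
    (hB : IsCh p (fun s => (X s, E s)) W (fun c w => ∏ i, bscR ((1 - δ) / 2) (c.1 i) (w i))) :
    d * Real.log 2 - (Ent p (fun s => (E s, W s)) - Ent p E) ≤
      δ ^ 2 * (d * Real.log 2 - (Ent p (fun s => (E s, X s)) - Ent p E)) := by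
  have : ∀ j : ℕ, j ≤ d → j * Real.log 2 - (Ent p (fun s => (E s, mask j (W s))) - Ent p E) ≤
      δ ^ 2 * (j * Real.log 2 - (Ent p (fun s => (E s, mask j (X s))) - Ent p E)) := by
    intro j
    induction j with
    | zero =>
      intro _
      simp only [mask_zero, Nat.cast_zero, zero_mul]
      have : Ent p (fun s => (E s, (fun _ : Fin d => false))) = Ent p E :=
        Ent_congr _ _ _ (by simp)
      rw [this]; simp
    | succ j ih =>
      intro hj
      have ih := ih (by omega)
      have hs := stepCh (fun s => (X s, E s)) (fun c => c.1) W hB j hj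
      have hg := gerberRV hp h1 (fun s => (E s, mask j (W s))) (fun s => X s ⟨j, hj⟩)
        (fun s => W s ⟨j, hj⟩) hδ0 hδ1
        (hs.coarsen (fun c => ((c.1.2, c.2), c.1.1 ⟨j, hj⟩)) _ (fun _ _ => rfl))
      have hm := maskCh (fun s => (X s, E s)) (fun c => c.1) W hB j
      have n1 := (hm.coarsen (fun c => (c.2, mask j c.1)) (fun c => kM _ j c.2)
        (fun c v => by rw [kM_mask _ le_rfl])).ent (fun c => kM_sum _ _ _)
      have n2 := (hm.coarsen (fun c => (c.2, mask (j + 1) c.1)) (fun c => kM _ j c.2)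
        (fun c v => by rw [kM_mask _ (Nat.le_succ j)])).ent (fun c => kM_sum _ _ _)
      simp only [kM_mask _ le_rfl] at n1
      simp only [kM_mask _ (Nat.le_succ j)] at n2
      have sm := submod hp (fun s => X s ⟨j, hj⟩) (fun s => mask j (X s))
        (fun s => (E s, mask j (W s)))
      have e1 : Ent p (fun s => (X s ⟨j, hj⟩, mask j (X s), (E s, mask j (W s)))) =
          Ent p (fun s => ((E s, mask (j + 1) (X s)), mask j (W s))) :=
        Ent_congr _ _ _ (by intro s s'; simp only [Prod.mk.injEq, mask_succ_iff hj]; tauto)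
      have e2 : Ent p (fun s => (X s ⟨j, hj⟩, (E s, mask j (W s)))) =
          Ent p (fun s => ((E s, mask j (W s)), X s ⟨j, hj⟩)) :=
        Ent_congr _ _ _ (by intro s s'; simp only [Prod.mk.injEq]; tauto)
      have e3 : Ent p (fun s => (mask j (X s), (E s, mask j (W s)))) =
          Ent p (fun s => ((E s, mask j (X s)), mask j (W s))) :=
        Ent_congr _ _ _ (by intro s s'; simp only [Prod.mk.injEq]; tauto)
      have e4 : Ent p (fun s => (E s, mask (j + 1) (W s))) =
          Ent p (fun s => ((E s, mask j (W s)), W s ⟨j, hj⟩)) :=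
        Ent_congr _ _ _ (by intro s s'; simp only [Prod.mk.injEq, mask_succ_iff hj]; tauto)
      rw [e1, e2, e3] at sm
      rw [e4]
      have key : Ent p (fun s => (E s, mask (j + 1) (X s))) - Ent p (fun s => (E s, mask j (X s))) ≤
          Ent p (fun s => ((E s, mask j (W s)), X s ⟨j, hj⟩)) - Ent p (fun s => (E s, mask j (W s))) := by
        linarith
      have := mul_le_mul_of_nonneg_left key (sq_nonneg δ)
      push_cast
      nlinarith
  have := this d le_rfl
  simpa only [mask_all] using this

lemma fano [Fintype ξ] {d : ℕ} (hd : 0 < d) {p : S → ℝ} (hp : ∀ s, 0 ≤ p s) (h1 : ∑ s, p s = 1)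
    (E : S → ξ) (W : S → Fin d → Bool) (ψ : ξ → Fin d → Bool) :
    Ent p (fun s => (E s, W s)) - Ent p E ≤
      d * Real.binEntropy (∑ s, p s *
        (((Finset.univ.filter fun j : Fin d => W s j ≠ ψ (E s) j).card : ℝ) / d)) := by
  let err : Fin d → S → Bool := fun j s => xor (W s j) (ψ (E s) j)
  let q : Fin d → ℝ := fun j => Pr p (err j) true
  have hq0 : ∀ j, 0 ≤ q j := fun j => Pr_nonneg hp _ _
  have hqs : ∀ j, q j + Pr p (err j) false = 1 := fun j => by
    have := sum_Pr_one p (err j); rw [Fintype.sum_bool, h1] at this; exact this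
  have hq1 : ∀ j, q j ≤ 1 := fun j => by
    have := hqs j; have := Pr_nonneg hp (err j) false; linarith
  have hstep : ∀ (j : ℕ) (hj : j < d), Ent p (fun s => (E s, mask (j+1) (W s))) ≤
      Ent p (fun s => (E s, mask j (W s))) + Real.binEntropy (q ⟨j, hj⟩) := by
    intro j hj
    have s1 := submod hp (fun s => mask j (W s)) (fun s => W s ⟨j, hj⟩) E
    have s2 := submod hp (err ⟨j, hj⟩) E (fun _ => ())
    have z : Ent p (fun _ : S => ()) = 0 := Ent_const h1 _ (fun _ _ => rfl)
    have e1 : Ent p (fun s => (mask j (W s), W s ⟨j, hj⟩, E s)) =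
        Ent p (fun s => (E s, mask (j+1) (W s))) :=
      Ent_congr _ _ _ (by intro s s'; simp only [Prod.mk.injEq, mask_succ_iff hj]; tauto)
    have e2 : Ent p (fun s => (mask j (W s), E s)) = Ent p (fun s => (E s, mask j (W s))) :=
      Ent_congr _ _ _ (by intro s s'; simp only [Prod.mk.injEq]; tauto)
    have e3 : Ent p (fun s => (err ⟨j, hj⟩ s, E s, ())) = Ent p (fun s => (W s ⟨j, hj⟩, E s)) :=
      Ent_congr _ _ _ (by
        intro s s'
        simp only [Prod.mk.injEq, and_true, err]
        constructor
        · rintro ⟨h, h'⟩; rw [h'] at h; exact ⟨by simpa using h, h'⟩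
        · rintro ⟨h, h'⟩; rw [h', h]; exact ⟨rfl, rfl⟩)
    have e4 : Ent p (fun s => (err ⟨j, hj⟩ s, ())) = Ent p (err ⟨j, hj⟩) :=
      Ent_congr _ _ _ (by intro s s'; simp)
    have e5 : Ent p (fun s => (E s, ())) = Ent p E :=
      Ent_congr _ _ _ (by intro s s'; simp)
    have e6 : Ent p (err ⟨j, hj⟩) = Real.binEntropy (q ⟨j, hj⟩) := by
      rw [Ent_eq, Fintype.sum_bool, Real.binEntropy_eq_negMulLog_add_negMulLog_one_sub]
      congr 2
      have := hqs ⟨j, hj⟩; linarith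
    rw [e1, e2] at s1
    rw [e3, e4, e5, e6, z] at s2
    linarith
  have hsum : ∀ j (hj : j ≤ d), Ent p (fun s => (E s, mask j (W s))) ≤
      Ent p E + ∑ i ∈ Finset.range j, if hi : i < d then Real.binEntropy (q ⟨i, hi⟩) else 0 := by
    intro j
    induction j with
    | zero =>
      intro _
      simp only [mask_zero, Finset.range_zero, Finset.sum_empty, add_zero]
      exact le_of_eq (Ent_congr _ _ _ (by simp))
    | succ j ih =>
      intro hj
      rw [Finset.sum_range_succ, dif_pos (show j < d by omega)]
      have := hstep j hj
      have := ih (by omega)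
      linarith
  have hS := hsum d le_rfl
  simp only [mask_all] at hS
  rw [Finset.sum_range] at hS
  simp only [Fin.is_lt, dif_pos, Fin.eta] at hS
  have hd' : (0:ℝ) < d := by exact_mod_cast hd
  have jensen := Real.strictConcave_binEntropy.concaveOn.le_map_sum (t := Finset.univ)
    (w := fun _ : Fin d => (d:ℝ)⁻¹) (p := q) (fun _ _ => by positivity)
    (by simp [hd'.ne']) (fun j _ => ⟨hq0 j, hq1 j⟩)
  simp only [smul_eq_mul, ← Finset.mul_sum] at jensen
  have havg : (d:ℝ)⁻¹ * ∑ j, q j = ∑ s, p s *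
        (((Finset.univ.filter fun j : Fin d => W s j ≠ ψ (E s) j).card : ℝ) / d) := by
    simp only [q, Pr]
    rw [Finset.sum_comm, Finset.mul_sum]
    refine Finset.sum_congr rfl fun s _ => ?_
    rw [Finset.card_filter]
    push_cast
    rw [div_eq_inv_mul, mul_left_comm]
    congr 1
    rw [Finset.mul_sum]
    refine Finset.sum_congr rfl fun j _ => ?_
    simp only [err, mul_ite, mul_one, mul_zero]
    congr 1
    simp
  rw [← havg]
  have := mul_le_mul_of_nonneg_left jensen hd'.le
  rw [← mul_assoc, mul_inv_cancel₀ hd'.ne', one_mul] at this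
  linarith

end core

section protocol
variable {S υ ι ζ : Type*} [Fintype S]

lemma IsCh.drop {p : S → ℝ} {C : S → α} {U : S → υ} {V : S → β} {k : α × υ → β → ℝ}
    (h : IsCh p (fun s => (C s, U s)) V k) (φ : α → υ) (hU : ∀ s, U s = φ (C s)) :
    IsCh p C V (fun c v => k (c, φ c) v) := by
  intro c v
  have h' := h (c, φ c) v
  have e1 : Pr p (fun s => (C s, V s)) (c, v) = Pr p (fun s => ((C s, U s), V s)) ((c, φ c), v) := by
    refine Finset.sum_congr rfl fun s _ => ?_
    congr 1
    simp only [Prod.mk.injEq, hU]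
    refine propext ⟨?_, ?_⟩
    · rintro ⟨h1, h2⟩; exact ⟨⟨h1, by rw [h1]⟩, h2⟩
    · rintro ⟨⟨h1, _⟩, h2⟩; exact ⟨h1, h2⟩
  have e2 : Pr p C c = Pr p (fun s => (C s, U s)) (c, φ c) := by
    refine Finset.sum_congr rfl fun s _ => ?_
    congr 1
    simp only [Prod.mk.injEq, hU]
    refine propext ⟨?_, ?_⟩
    · rintro h1; exact ⟨h1, by rw [h1]⟩
    · rintro ⟨h1, _⟩; exact h1
  rw [e1, e2, h']

lemma vp_succ_iff (V : ℕ → S → β) (t : ℕ) (s s' : S) :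
    ((fun i : Fin (t + 1) => V i s) = fun i : Fin (t + 1) => V i s') ↔
    ((fun i : Fin t => V i s) = fun i : Fin t => V i s') ∧ V t s = V t s' := by
  simp only [funext_iff, Fin.forall_fin_succ']
  simp

/-- entropy increments of the received word -/
lemma chain_step [Fintype α] [Fintype β] [Fintype ζ] {p : S → ℝ} (Z : S → α) (V : ℕ → S → β)
    (t : ℕ) (kk : α → (Fin t → β) → β → ℝ) (hk : ∀ z v, ∑ b, kk z v b = 1)
    (h : IsCh p (fun s => (Z s, fun i : Fin t => V i s)) (V t) (fun c b => kk c.1 c.2 b))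
    (g : α → ζ) (kk' : ζ → (Fin t → β) → β → ℝ) (hkk : ∀ z v b, kk z v b = kk' (g z) v b) :
    Ent p (fun s => (g (Z s), fun i : Fin (t + 1) => V i s)) =
      Ent p (fun s => (g (Z s), fun i : Fin t => V i s)) +
        ∑ s, p s * ∑ b, Real.negMulLog (kk (Z s) (fun i : Fin t => V i s) b) := by
  -- restrict the output kernel to be normalised everywhere
  have h2 := h.coarsen (fun c => (g c.1, c.2)) (fun c b => kk' c.1 c.2 b) (fun c b => hkk _ _ _)
  have e : Ent p (fun s => (g (Z s), fun i : Fin (t + 1) => V i s)) =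
      Ent p (fun s => ((g (Z s), fun i : Fin t => V i s), V t s)) :=
    Ent_congr _ _ _ (by intro s s'; simp only [Prod.mk.injEq, vp_succ_iff]; tauto)
  simp only [hkk]
  rw [e, Ent_eq, Fintype.sum_prod_type, Ent_eq,
    sum_Pr p (fun s => (g (Z s), fun i : Fin t => V i s))
      (fun c => ∑ b, Real.negMulLog (kk' c.1 c.2 b)), ← Finset.sum_add_distrib]
  refine Finset.sum_congr rfl fun c _ => ?_
  rw [Finset.sum_congr rfl fun b _ => by rw [h2 c b, Real.negMulLog_mul], Finset.sum_add_distrib,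
    ← Finset.sum_mul, ← Finset.mul_sum]
  by_cases hc : Pr p (fun s => (g (Z s), fun i : Fin t => V i s)) c = 0
  · rw [hc]; simp
  · congr 1
    have : ∃ z, g z = c.1 := by
      by_contra hne
      push Not at hne
      apply hc
      refine Finset.sum_eq_zero fun s _ => if_neg fun hh => hne (Z s) ?_
      rw [← hh]
    obtain ⟨z, hz⟩ := this
    have := hk z c.2
    simp only [hkk, hz] at this
    rw [this, one_mul]

lemma feedback_bound [Fintype α] [Fintype β] [Fintype γ] [Fintype ι] [Fintype υ] {p : S → ℝ}
    (hp : ∀ s, 0 ≤ p s) (h1 : ∑ s, p s = 1)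
    (W : S → α) (X : S → γ) (Q : γ → ι) (V : ℕ → S → β) (U : ℕ → S → υ) (T : ℕ)
    (φ : (t : ℕ) → ι → (Fin t → β) → υ)
    (k : υ → β → ℝ) (hk : ∀ u, ∑ b, k u b = 1)
    (hU : ∀ t < T, ∀ s, U t s = φ t (Q (X s)) (fun i : Fin t => V i s))
    (hCh : ∀ t < T, IsCh p (fun s => ((W s, X s, fun i : Fin t => V i s), U t s)) (V t)
      (fun c b => k c.2 b))
    (η : ℝ) (hη0 : 0 ≤ η) (hη1 : η ≤ 1) (hS : SDPI k η) :
    Ent p W + Ent p (fun s => fun i : Fin T => V i s) - Ent p (fun s => (W s, fun i : Fin T => V i s))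
      ≤ (1 - (1 - η) ^ T) * (Ent p W + Ent p (fun s => Q (X s)) - Ent p (fun s => (W s, Q (X s)))) := by
  have hch : ∀ t < T, IsCh p (fun s => ((W s, X s), fun i : Fin t => V i s)) (V t)
      (fun c b => k (φ t (Q c.1.2) c.2) b) := fun t ht =>
    ((hCh t ht).coarsen (fun c => (((c.1.1, c.1.2.1), c.1.2.2), c.2)) (fun c b => k c.2 b)
      (fun _ _ => rfl)).drop (fun c => φ t (Q c.1.2) c.2) (hU t ht)
  have main : ∀ t ≤ T,
      (Ent p (fun s => (Q (X s), fun i : Fin t => V i s)) - Ent p (fun s => Q (X s)) =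
       Ent p (fun s => ((W s, Q (X s)), fun i : Fin t => V i s)) - Ent p (fun s => (W s, Q (X s)))) ∧
      Ent p W + Ent p (fun s => fun i : Fin t => V i s) - Ent p (fun s => (W s, fun i : Fin t => V i s))
      ≤ (1 - (1 - η) ^ t) * (Ent p W + Ent p (fun s => Q (X s)) - Ent p (fun s => (W s, Q (X s)))) := by
    intro t
    induction t with
    | zero =>
      intro _
      have e0 : Ent p (fun s => fun i : Fin 0 => V i s) = 0 :=
        Ent_const h1 _ (fun s s' => Subsingleton.elim _ _)
      have e1 : Ent p (fun s => (W s, fun i : Fin 0 => V i s)) = Ent p W :=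
        Ent_congr _ _ _ (by
          intro s s'
          rw [Prod.mk.injEq]
          exact ⟨fun h => h.1, fun h => ⟨h, Subsingleton.elim _ _⟩⟩)
      have e2 : Ent p (fun s => (Q (X s), fun i : Fin 0 => V i s)) = Ent p (fun s => Q (X s)) :=
        Ent_congr _ _ _ (by
          intro s s'
          rw [Prod.mk.injEq]
          exact ⟨fun h => h.1, fun h => ⟨h, Subsingleton.elim _ _⟩⟩)
      have e3 : Ent p (fun s => ((W s, Q (X s)), fun i : Fin 0 => V i s)) =
          Ent p (fun s => (W s, Q (X s))) :=
        Ent_congr _ _ _ (by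
          intro s s'
          rw [Prod.mk.injEq]
          exact ⟨fun h => h.1, fun h => ⟨h, Subsingleton.elim _ _⟩⟩)
      rw [e0, e1, e2, e3]
      simp
    | succ t ih =>
      intro ht
      obtain ⟨ih1, ih2⟩ := ih (by omega)
      have ht' : t < T := ht
      have c1 := chain_step (fun s => (W s, X s)) V t (fun z v b => k (φ t (Q z.2) v) b)
        (fun _ _ => hk _) (hch t ht') (fun z => Q z.2) (fun y v b => k (φ t y v) b) (fun _ _ _ => rfl)
      have c2 := chain_step (fun s => (W s, X s)) V t (fun z v b => k (φ t (Q z.2) v) b)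
        (fun _ _ => hk _) (hch t ht') (fun z => (z.1, Q z.2)) (fun y v b => k (φ t y.2 v) b)
        (fun _ _ _ => rfl)
      dsimp only at c1 c2
      refine ⟨by rw [c1, c2]; linarith, ?_⟩
      have hs := condSDPI hp W (fun s => fun i : Fin t => V i s) (U t) (V t) k η hS
        ((hCh t ht').coarsen (fun c => ((c.1.1, c.1.2.2), c.2)) (fun c b => k c.2 b) (fun _ _ => rfl))
      have e1 : Ent p (fun s => (fun i : Fin t => V i s, V t s)) =
          Ent p (fun s => fun i : Fin (t + 1) => V i s) :=
        Ent_congr _ _ _ (by intro s s'; simp only [Prod.mk.injEq, vp_succ_iff])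
      have e2 : Ent p (fun s => ((W s, fun i : Fin t => V i s), V t s)) =
          Ent p (fun s => (W s, fun i : Fin (t + 1) => V i s)) :=
        Ent_congr _ _ _ (by intro s s'; simp only [Prod.mk.injEq, vp_succ_iff]; tauto)
      rw [e1, e2] at hs
      have sm := submod hp W (fun s => Q (X s)) (fun s => (U t s, fun i : Fin t => V i s))
      have hUc : ∀ s s', Q (X s) = Q (X s') →
          ((fun i : Fin t => V i s) = fun i : Fin t => V i s') → U t s = U t s' := by
        intro s s' ha hb
        rw [hU t ht' s, hU t ht' s', ha, hb]
      have e3 : Ent p (fun s => (W s, Q (X s), (U t s, fun i : Fin t => V i s))) =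
          Ent p (fun s => ((W s, Q (X s)), fun i : Fin t => V i s)) :=
        Ent_congr _ _ _ (by
          intro s s'; simp only [Prod.mk.injEq]; have := hUc s s'; tauto)
      have e4 : Ent p (fun s => (Q (X s), (U t s, fun i : Fin t => V i s))) =
          Ent p (fun s => (Q (X s), fun i : Fin t => V i s)) :=
        Ent_congr _ _ _ (by
          intro s s'; simp only [Prod.mk.injEq]; have := hUc s s'; tauto)
      have e5 : Ent p (fun s => (W s, (U t s, fun i : Fin t => V i s))) =
          Ent p (fun s => ((W s, fun i : Fin t => V i s), U t s)) :=
        Ent_congr _ _ _ (by intro s s'; simp only [Prod.mk.injEq]; tauto)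
      have e6 : Ent p (fun s => (U t s, fun i : Fin t => V i s)) =
          Ent p (fun s => (fun i : Fin t => V i s, U t s)) :=
        Ent_congr _ _ _ (by intro s s'; simp only [Prod.mk.injEq]; tauto)
      rw [e3, e4, e5, e6] at sm
      have key := mul_le_mul_of_nonneg_left (show
        Ent p (fun s => (W s, fun i : Fin t => V i s)) + Ent p (fun s => (fun i : Fin t => V i s, U t s))
        - Ent p (fun s => ((W s, fun i : Fin t => V i s), U t s)) - Ent p (fun s => fun i : Fin t => V i s)
        ≤ (Ent p W + Ent p (fun s => Q (X s)) - Ent p (fun s => (W s, Q (X s)))) -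
          (Ent p W + Ent p (fun s => fun i : Fin t => V i s)
            - Ent p (fun s => (W s, fun i : Fin t => V i s))) by linarith) hη0
      have k2 := mul_le_mul_of_nonneg_left ih2 (sub_nonneg.2 hη1)
      rw [pow_succ]
      nlinarith
  exact (main T le_rfl).2

lemma capacity_bound [Fintype α] [Fintype β] [Fintype γ] [Fintype ι] [Fintype υ] {p : S → ℝ}
    (hp : ∀ s, 0 ≤ p s) (h1 : ∑ s, p s = 1)
    (W : S → α) (X : S → γ) (Q : γ → ι) (V : ℕ → S → β) (U : ℕ → S → υ) (T : ℕ)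
    (φ : (t : ℕ) → ι → (Fin t → β) → υ)
    (k : υ → β → ℝ) (hk : ∀ u, ∑ b, k u b = 1)
    (hU : ∀ t < T, ∀ s, U t s = φ t (Q (X s)) (fun i : Fin t => V i s))
    (hCh : ∀ t < T, IsCh p (fun s => ((W s, X s, fun i : Fin t => V i s), U t s)) (V t)
      (fun c b => k c.2 b))
    (cap : ℝ) (hC : CapB k cap) :
    Ent p X + Ent p (fun s => fun i : Fin T => V i s) - Ent p (fun s => (X s, fun i : Fin T => V i s))
      ≤ T * cap := by
  have hch : ∀ t < T, IsCh p (fun s => (X s, fun i : Fin t => V i s)) (V t)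
      (fun c b => k (φ t (Q c.1) c.2) b) := fun t ht =>
    ((hCh t ht).coarsen (fun c => ((c.1.2.1, c.1.2.2), c.2)) (fun c b => k c.2 b)
      (fun _ _ => rfl)).drop (fun c => φ t (Q c.1) c.2) (hU t ht)
  have main : ∀ t ≤ T,
      Ent p X + Ent p (fun s => fun i : Fin t => V i s) - Ent p (fun s => (X s, fun i : Fin t => V i s))
      ≤ t * cap := by
    intro t
    induction t with
    | zero =>
      intro _
      have e0 : Ent p (fun s => fun i : Fin 0 => V i s) = 0 :=
        Ent_const h1 _ (fun s s' => Subsingleton.elim _ _)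
      have e1 : Ent p (fun s => (X s, fun i : Fin 0 => V i s)) = Ent p X :=
        Ent_congr _ _ _ (by
          intro s s'
          rw [Prod.mk.injEq]
          exact ⟨fun h => h.1, fun h => ⟨h, Subsingleton.elim _ _⟩⟩)
      rw [e0, e1]
      simp
    | succ t ih =>
      intro ht
      have ih := ih (by omega)
      have ht' : t < T := ht
      have c1 := chain_step X V t (fun z v b => k (φ t (Q z) v) b)
        (fun _ _ => hk _) (hch t ht') (fun z => z) (fun y v b => k (φ t (Q y) v) b) (fun _ _ _ => rfl)
      have hUV : IsCh p (fun s => (fun i : Fin t => V i s, U t s)) (V t) (fun c b => k c.2 b) :=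
        (hCh t ht').coarsen (fun c => (c.1.2.2, c.2)) (fun c b => k c.2 b) (fun _ _ => rfl)
      have c2 := (hUV.coarsen (fun c => (c.2, c.1)) (fun c b => k c.1 b) (fun _ _ => rfl)).ent
        (fun c => hk _)
      dsimp only at c1 c2
      rw [Finset.sum_congr rfl fun s _ => by rw [hU t ht' s]] at c2
      have hs := condCap hp h1 (fun s => fun i : Fin t => V i s) (U t) (V t) k cap hC hUV
      have e1 : Ent p (fun s => (fun i : Fin t => V i s, V t s)) =
          Ent p (fun s => fun i : Fin (t + 1) => V i s) :=
        Ent_congr _ _ _ (by intro s s'; simp only [Prod.mk.injEq, vp_succ_iff])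
      rw [e1] at hs
      push_cast
      linarith
  exact main T le_rfl

lemma nofb_bound [Fintype α] [Fintype β] [Fintype γ] [Fintype ι] [Fintype υ] {p : S → ℝ}
    (hp : ∀ s, 0 ≤ p s) (h1 : ∑ s, p s = 1)
    (W : S → α) (X : S → γ) (Q : γ → ι) (V : ℕ → S → β) (U : ℕ → S → υ) (T : ℕ)
    (φ : ℕ → ι → υ)
    (k : υ → β → ℝ)
    (hU : ∀ t < T, ∀ s, U t s = φ t (Q (X s)))
    (hCh : ∀ t < T, IsCh p (fun s => ((W s, X s, fun i : Fin t => V i s), U t s)) (V t)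
      (fun c b => k c.2 b))
    (η : ℝ) (hη0 : 0 ≤ η)
    (hS : SDPI (fun (u : Fin T → υ) (v : Fin T → β) => ∏ t, k (u t) (v t)) η) :
    Ent p W + Ent p (fun s => fun i : Fin T => V i s) - Ent p (fun s => (W s, fun i : Fin T => V i s))
      ≤ η * (Ent p W + Ent p (fun s => Q (X s)) - Ent p (fun s => (W s, Q (X s)))) := by
  have hch : ∀ t < T, IsCh p (fun s => (W s, X s, fun i : Fin t => V i s)) (V t)
      (fun c b => k (φ t (Q c.2.1)) b) := fun t ht =>
    (hCh t ht).drop (fun c => φ t (Q c.2.1)) (hU t ht)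
  have main : ∀ t ≤ T, IsCh p (fun s => (W s, X s)) (fun s => fun i : Fin t => V i s)
      (fun c v => ∏ i : Fin t, k (φ i (Q c.2)) (v i)) := by
    intro t
    induction t with
    | zero =>
      intro _ c v
      simp only [Finset.univ_eq_empty, Finset.prod_empty, mul_one]
      refine Finset.sum_congr rfl fun s _ => ?_
      congr 1
      simp only [Prod.mk.injEq]
      exact propext ⟨fun h => h.1, fun h => ⟨h, Subsingleton.elim _ _⟩⟩
    | succ t ih =>
      intro ht c v
      have ih := ih (by omega) c (fun i => v i.castSucc)
      have h2 := hch t ht (c.1, c.2, fun i => v i.castSucc) (v (Fin.last t))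
      have e1 : Pr p (fun s => ((W s, X s), fun i : Fin (t + 1) => V i s)) (c, v) =
        Pr p (fun s => ((W s, X s, fun i : Fin t => V i s), V t s))
          ((c.1, c.2, fun i => v i.castSucc), v (Fin.last t)) := by
        refine Finset.sum_congr rfl fun s _ => ?_
        congr 1
        obtain ⟨c1, c2⟩ := c
        simp only [Prod.mk.injEq, funext_iff, Fin.forall_fin_succ' (n := t)]
        simp only [Fin.val_castSucc, Fin.val_last]
        exact propext (by tauto)
      have e2 : Pr p (fun s => ((W s, X s), fun i : Fin t => V i s)) (c, fun i => v i.castSucc) =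
        Pr p (fun s => (W s, X s, fun i : Fin t => V i s)) (c.1, c.2, fun i => v i.castSucc) := by
        refine Finset.sum_congr rfl fun s _ => ?_
        congr 1
        obtain ⟨c1, c2⟩ := c
        simp only [Prod.mk.injEq]
        exact propext (by tauto)
      dsimp only at ih h2 ⊢
      rw [e1, h2, ← e2, ih, Fin.prod_univ_castSucc]
      simp only [Fin.val_castSucc, Fin.val_last]
      ring
  have hm := main T le_rfl
  have hUU : (fun s => fun t : Fin T => U t s) = fun s => fun t : Fin T => φ t (Q (X s)) := by
    funext s t; exact hU t t.2 s
  have hS' := condSDPI hp W (fun _ => ()) (fun s => fun t : Fin T => φ t (Q (X s)))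
    (fun s => fun i : Fin T => V i s) _ η hS
    (hm.coarsen (fun c => ((c.1, ()), fun t : Fin T => φ t (Q c.2))) 
      (fun c v => ∏ t, k (c.2 t) (v t)) (fun _ _ => rfl))
  have z : Ent p (fun _ : S => ()) = 0 := Ent_const h1 _ (fun _ _ => rfl)
  have e1 : Ent p (fun s => (W s, ())) = Ent p W := Ent_congr _ _ _ (by simp)
  have e2 : Ent p (fun s => ((), fun i : Fin T => V i s)) = Ent p (fun s => fun i : Fin T => V i s) :=
    Ent_congr _ _ _ (by simp)
  have e3 : Ent p (fun s => ((W s, ()), fun i : Fin T => V i s)) =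
      Ent p (fun s => (W s, fun i : Fin T => V i s)) :=
    Ent_congr _ _ _ (by simp)
  have e4 : Ent p (fun s => ((), fun t : Fin T => φ t (Q (X s)))) =
      Ent p (fun s => fun t : Fin T => φ t (Q (X s))) := Ent_congr _ _ _ (by simp)
  have e5 : Ent p (fun s => ((W s, ()), fun t : Fin T => φ t (Q (X s)))) =
      Ent p (fun s => (W s, fun t : Fin T => φ t (Q (X s)))) := Ent_congr _ _ _ (by simp)
  rw [z, e1, e2, e3, e4, e5] at hS'
  have sm := submod hp W (fun s => Q (X s)) (fun s => fun t : Fin T => φ t (Q (X s)))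
  have e6 : Ent p (fun s => (W s, Q (X s), fun t : Fin T => φ t (Q (X s)))) =
      Ent p (fun s => (W s, Q (X s))) := Ent_congr _ _ _ (by
        intro s s'; simp only [Prod.mk.injEq]
        exact ⟨fun h => ⟨h.1, h.2.1⟩, fun h => ⟨h.1, h.2, by rw [h.2]⟩⟩)
  have e7 : Ent p (fun s => (Q (X s), fun t : Fin T => φ t (Q (X s)))) =
      Ent p (fun s => Q (X s)) := Ent_congr _ _ _ (by
        intro s s'; simp only [Prod.mk.injEq]
        exact ⟨fun h => h.1, fun h => ⟨h, by rw [h]⟩⟩)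
  rw [e6, e7] at sm
  have := mul_le_mul_of_nonneg_left (show
    Ent p W + Ent p (fun s => fun t : Fin T => φ t (Q (X s))) -
      Ent p (fun s => (W s, fun t : Fin T => φ t (Q (X s)))) ≤
    Ent p W + Ent p (fun s => Q (X s)) - Ent p (fun s => (W s, Q (X s))) by linarith) hη0
  linarith

/-- reversal of the source channel, given everything received -/
lemma reverse_ch {d : ℕ} [Fintype β] [Fintype υ] {p : S → ℝ}
    (W X : S → Fin d → Bool) (Q : (Fin d → Bool) → ι) (V : ℕ → S → β) (U : ℕ → S → υ) (T : ℕ)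
    (φ : (t : ℕ) → ι → (Fin t → β) → υ) (k : υ → β → ℝ) (ε : ℝ)
    (hU : ∀ t < T, ∀ s, U t s = φ t (Q (X s)) (fun i : Fin t => V i s))
    (hCh : ∀ t < T, IsCh p (fun s => ((W s, X s, fun i : Fin t => V i s), U t s)) (V t)
      (fun c b => k c.2 b))
    (hB : IsCh p X W (fun c w => ∏ i, bscR ε (c i) (w i))) :
    IsCh p (fun s => (X s, fun i : Fin T => V i s)) W (fun c w => ∏ i, bscR ε (c.1 i) (w i)) := by
  have hch : ∀ t < T, IsCh p (fun s => (W s, X s, fun i : Fin t => V i s)) (V t)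
      (fun c b => k (φ t (Q c.2.1) c.2.2) b) := fun t ht =>
    (hCh t ht).drop (fun c => φ t (Q c.2.1) c.2.2) (hU t ht)
  have main : ∀ t ≤ T, IsCh p (fun s => (X s, fun i : Fin t => V i s)) W
      (fun c w => ∏ i, bscR ε (c.1 i) (w i)) := by
    intro t
    induction t with
    | zero =>
      intro _ c w
      have := hB c.1 w
      dsimp only at this ⊢
      have e1 : Pr p (fun s => ((X s, fun i : Fin 0 => V i s), W s)) (c, w) =
          Pr p (fun s => (X s, W s)) (c.1, w) := by
        refine Finset.sum_congr rfl fun s _ => ?_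
        congr 1
        obtain ⟨c1, c2⟩ := c
        simp only [Prod.mk.injEq]
        exact propext ⟨fun h => ⟨h.1.1, h.2⟩, fun h => ⟨⟨h.1, Subsingleton.elim _ _⟩, h.2⟩⟩
      have e2 : Pr p (fun s => (X s, fun i : Fin 0 => V i s)) c = Pr p X c.1 := by
        refine Finset.sum_congr rfl fun s _ => ?_
        congr 1
        obtain ⟨c1, c2⟩ := c
        simp only [Prod.mk.injEq]
        exact propext ⟨fun h => h.1, fun h => ⟨h, Subsingleton.elim _ _⟩⟩
      rw [e1, e2, this]
    | succ t ih =>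
      intro ht c w
      obtain ⟨x, v⟩ := c
      have ih := ih (by omega) (x, fun i => v i.castSucc) w
      have h2 := hch t ht (w, x, fun i => v i.castSucc) (v (Fin.last t))
      have h3 := ((hch t ht).coarsen (fun c => c.2) (fun c b => k (φ t (Q c.1) c.2) b)
        (fun _ _ => rfl)) (x, fun i => v i.castSucc) (v (Fin.last t))
      dsimp only at ih h2 h3 ⊢
      have e1 : Pr p (fun s => ((X s, fun i : Fin (t + 1) => V i s), W s)) ((x, v), w) =
        Pr p (fun s => ((W s, X s, fun i : Fin t => V i s), V t s))
          ((w, x, fun i => v i.castSucc), v (Fin.last t)) := by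
        refine Finset.sum_congr rfl fun s _ => ?_
        congr 1
        simp only [Prod.mk.injEq, funext_iff, Fin.forall_fin_succ' (n := t)]
        simp only [Fin.val_castSucc, Fin.val_last]
        exact propext (by tauto)
      have e2 : Pr p (fun s => (X s, fun i : Fin (t + 1) => V i s)) (x, v) =
        Pr p (fun s => ((X s, fun i : Fin t => V i s), V t s))
          ((x, fun i => v i.castSucc), v (Fin.last t)) := by
        refine Finset.sum_congr rfl fun s _ => ?_
        congr 1
        simp only [Prod.mk.injEq, funext_iff, Fin.forall_fin_succ' (n := t)]
        simp only [Fin.val_castSucc, Fin.val_last]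
        exact propext (by tauto)
      have e3 : Pr p (fun s => (W s, X s, fun i : Fin t => V i s)) (w, x, fun i => v i.castSucc) =
        Pr p (fun s => ((X s, fun i : Fin t => V i s), W s)) ((x, fun i => v i.castSucc), w) := by
        refine Finset.sum_congr rfl fun s _ => ?_
        congr 1
        simp only [Prod.mk.injEq]
        exact propext (by tauto)
      rw [e1, e2, h2, h3, e3, ih]
      ring
  exact main T le_rfl

end protocol

section klfin

lemma KLf_nonneg [Fintype α] {ν m : α → ℝ} (hν : ∀ u, 0 ≤ ν u) (hm : ∀ u, 0 ≤ m u)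
    (h1 : ∑ u, ν u = 1) (h2 : ∑ u, m u = 1) (hac : ∀ u, m u = 0 → ν u = 0) : 0 ≤ KLf ν m := by
  have : ∀ u, ν u - m u ≤ ν u * (Real.log (ν u) - Real.log (m u)) := by
    intro u
    rcases (hν u).eq_or_lt with h | h
    · rw [← h]; have := hm u; linarith
    · have hmu : 0 < m u := lt_of_le_of_ne (hm u) fun h' => h.ne' (hac u h'.symm)
      have := Real.log_le_sub_one_of_pos (div_pos hmu h)
      rw [Real.log_div hmu.ne' h.ne'] at this
      have := mul_le_mul_of_nonneg_left this h.le
      have e : ν u * (m u / ν u - 1) = m u - ν u := by field_simp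
      linarith
  have h := Finset.sum_le_sum fun u (_ : u ∈ Finset.univ) => this u
  rw [Finset.sum_sub_distrib, h1, h2] at h
  unfold KLf; linarith

lemma push_nonneg [Fintype α] {k : α → β → ℝ} (hk : ∀ u v, 0 ≤ k u v) {ν : α → ℝ}
    (hν : ∀ u, 0 ≤ ν u) (v : β) : 0 ≤ push k ν v :=
  Finset.sum_nonneg fun u _ => mul_nonneg (hν u) (hk u v)

lemma push_sum [Fintype α] [Fintype β] {k : α → β → ℝ} (hk1 : ∀ u, ∑ v, k u v = 1) {ν : α → ℝ} :
    ∑ v, push k ν v = ∑ u, ν u := by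
  unfold push
  rw [Finset.sum_comm]
  refine Finset.sum_congr rfl fun u _ => ?_
  rw [← Finset.mul_sum, hk1, mul_one]

lemma le_push [Fintype α] {k : α → β → ℝ} (hk : ∀ u v, 0 ≤ k u v) {ν : α → ℝ}
    (hν : ∀ u, 0 ≤ ν u) (u : α) (v : β) : ν u * k u v ≤ push k ν v :=
  Finset.single_le_sum (f := fun u => ν u * k u v) (fun u _ => mul_nonneg (hν u) (hk u v))
    (Finset.mem_univ u)

lemma push_ac [Fintype α] {k : α → β → ℝ} (hk : ∀ u v, 0 ≤ k u v) {ν m : α → ℝ}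
    (hm : ∀ u, 0 ≤ m u) (hac : ∀ u, m u = 0 → ν u = 0) (v : β) (h : push k m v = 0) :
    push k ν v = 0 := by
  have := (Finset.sum_eq_zero_iff_of_nonneg (fun u _ => mul_nonneg (hm u) (hk u v))).1 h
  refine Finset.sum_eq_zero fun u hu => ?_
  rcases mul_eq_zero.1 (this u hu) with h | h
  · rw [hac u h, zero_mul]
  · rw [h, mul_zero]

lemma dpi [Fintype α] [Fintype β] {k : α → β → ℝ} (hk : ∀ u v, 0 ≤ k u v)
    (hk1 : ∀ u, ∑ v, k u v = 1) {ν m : α → ℝ} (hν : ∀ u, 0 ≤ ν u) (hm : ∀ u, 0 ≤ m u)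
    (hac : ∀ u, m u = 0 → ν u = 0) :
    KLf (push k ν) (push k m) ≤ KLf ν m := by
  have key : ∀ u v, ν u * k u v * (Real.log (push k ν v) - Real.log (push k m v)
      - (Real.log (ν u) - Real.log (m u))) ≤
      m u * k u v * (push k ν v / push k m v) - ν u * k u v := by
    intro u v
    have hnn := push_nonneg hk hν v
    have hmn := push_nonneg hk hm v
    rcases (mul_nonneg (hν u) (hk u v)).eq_or_lt with h | h
    · rw [← h]
      have := mul_nonneg (mul_nonneg (hm u) (hk u v)) (div_nonneg hnn hmn)
      linarith
    · have hkp : 0 < k u v := pos_of_mul_pos_right h (hν u)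
      have hνp : 0 < ν u := pos_of_mul_pos_left h (hk u v)
      have hmu : 0 < m u := lt_of_le_of_ne (hm u) fun h' => hνp.ne' (hac u h'.symm)
      have p1 : 0 < push k ν v := lt_of_lt_of_le h (le_push hk hν u v)
      have p2 : 0 < push k m v := lt_of_lt_of_le (mul_pos hmu hkp) (le_push hk hm u v)
      have := Real.log_le_sub_one_of_pos (div_pos (mul_pos p1 hmu) (mul_pos p2 hνp))
      rw [Real.log_div (by positivity) (by positivity), Real.log_mul p1.ne' hmu.ne',
        Real.log_mul p2.ne' hνp.ne'] at this
      have := mul_le_mul_of_nonneg_left this h.le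
      have e : ν u * k u v * (push k ν v * m u / (push k m v * ν u) - 1) =
        m u * k u v * (push k ν v / push k m v) - ν u * k u v := by field_simp
      linarith
  have h := Finset.sum_le_sum fun u (_ : u ∈ Finset.univ) =>
    Finset.sum_le_sum fun v (_ : v ∈ Finset.univ) => key u v
  have e1 : ∑ u, ∑ v, ν u * k u v * (Real.log (push k ν v) - Real.log (push k m v)
      - (Real.log (ν u) - Real.log (m u))) = KLf (push k ν) (push k m) - KLf ν m := by
    simp only [mul_sub (ν _ * k _ _) (Real.log (push k ν _) - Real.log (push k m _)),
      Finset.sum_sub_distrib]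
    congr 1
    · rw [Finset.sum_comm]
      refine Finset.sum_congr rfl fun v _ => ?_
      rw [← Finset.sum_mul]; rfl
    · refine Finset.sum_congr rfl fun u _ => ?_
      rw [← Finset.sum_mul, ← Finset.mul_sum, hk1, mul_one]
  have e2 : ∑ u, ∑ v, (m u * k u v * (push k ν v / push k m v) - ν u * k u v) ≤ 0 := by
    rw [Finset.sum_comm]
    refine Finset.sum_nonpos fun v _ => ?_
    rw [Finset.sum_sub_distrib, ← Finset.sum_mul]
    change push k m v * (push k ν v / push k m v) - push k ν v ≤ 0
    by_cases hz : push k m v = 0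
    · rw [hz, push_ac hk hm hac v hz]; simp
    · rw [mul_div_cancel₀ _ hz]; simp
  linarith

lemma negMulLog_le_one {x : ℝ} (hx : 0 ≤ x) : Real.negMulLog x ≤ 1 := by
  rcases hx.eq_or_lt with h | h
  · rw [← h]; simp
  · have := Real.log_le_sub_one_of_pos (inv_pos.2 h)
    rw [Real.log_inv] at this
    have := mul_le_mul_of_nonneg_left this hx
    have e : x * (x⁻¹ - 1) = 1 - x := by field_simp
    unfold Real.negMulLog; linarith

lemma mi_bdd [Fintype α] [Fintype β] {k : α → β → ℝ} (hk : ∀ u v, 0 ≤ k u v)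
    (hk1 : ∀ u, ∑ v, k u v = 1) {m : α → ℝ} (hm : ∀ u, 0 ≤ m u) :
    ∑ u, m u * KLf (k u) (push k m) ≤ Fintype.card α := by
  have : ∀ u, m u * KLf (k u) (push k m) ≤ 1 := by
    intro u
    refine le_trans ?_ (negMulLog_le_one (hm u))
    have : ∀ v, m u * (k u v * (Real.log (k u v) - Real.log (push k m v))) ≤
        Real.negMulLog (m u) * k u v := by
      intro v
      rcases (hk u v).eq_or_lt with h | h
      · rw [← h]; simp
      rcases (hm u).eq_or_lt with h' | h'
      · rw [← h']; simp
      have := Real.log_le_log (mul_pos h' h) (le_push hk hm u v)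
      rw [Real.log_mul h'.ne' h.ne'] at this
      have := mul_le_mul_of_nonneg_left this (mul_pos h' h).le
      unfold Real.negMulLog
      linarith
    have h := Finset.sum_le_sum fun v (_ : v ∈ Finset.univ) => this v
    rwa [← Finset.mul_sum, ← Finset.mul_sum, hk1, mul_one] at h
  refine (Finset.sum_le_sum fun u (_ : u ∈ Finset.univ) => this u).trans ?_
  simp

variable [MeasurableSpace α] [MeasurableSpace β] [Fintype α] [Fintype β]
  [MeasurableSingletonClass α] [MeasurableSingletonClass β]

lemma ac_of_fin {ν m : Measure α} (h : ∀ x, m {x} = 0 → ν {x} = 0) : ν ≪ m := by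
  intro s hs
  rw [← Set.biUnion_of_singleton s, measure_biUnion_null_iff (Set.toFinite s).countable]
  intro x hx
  exact h x (measure_mono_null (by simpa using hx) hs)

lemma klDiv2_fin (ν m : Measure α) [IsProbabilityMeasure ν] [IsProbabilityMeasure m]
    (h : ∀ x, m.real {x} = 0 → ν.real {x} = 0) :
    klDiv2 ν m = ENNReal.ofReal (KLf (fun x => ν.real {x}) (fun x => m.real {x}) / Real.log 2) := by
  have hac : ν ≪ m := ac_of_fin fun x hx => by
    have := h x (by simp [measureReal_def, hx])
    simpa [measureReal_def, ENNReal.toReal_eq_zero_iff] using this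
  unfold klDiv2
  rw [if_pos ⟨hac, Integrable.of_finite⟩, integral_fintype Integrable.of_finite]
  congr 1
  unfold KLf
  rw [Finset.sum_div]
  refine Finset.sum_congr rfl fun x _ => ?_
  by_cases hx : ν.real {x} = 0
  · simp [hx]
  have hmx : m.real {x} ≠ 0 := fun hh => hx (h x hh)
  have e := Measure.setLIntegral_rnDeriv hac {x}
  rw [lintegral_singleton] at e
  have e' : (ν.rnDeriv m x).toReal * m.real {x} = ν.real {x} := by
    rw [measureReal_def, measureReal_def, ← ENNReal.toReal_mul, e]
  rw [eq_div_of_mul_eq hmx e', Real.logb, Real.log_div hx hmx, smul_eq_mul]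
  ring

lemma klDiv2_top (ν m : Measure α)
    (h : ¬ ∀ x, m.real {x} = 0 → ν.real {x} = 0) [IsFiniteMeasure m] :
    klDiv2 ν m = ⊤ := by
  unfold klDiv2
  rw [if_neg]
  rintro ⟨hac, -⟩
  apply h
  intro x hx
  have : m {x} = 0 := by simpa [measureReal_def, ENNReal.toReal_eq_zero_iff] using hx
  simp [measureReal_def, hac this]

lemma sum_real_one (ν : Measure α) [IsProbabilityMeasure ν] : ∑ x, ν.real {x} = 1 := by
  have := integral_fintype (μ := ν) (f := fun _ : α => (1:ℝ)) (Integrable.of_finite)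
  simpa using this.symm

lemma bind_real (ν : Measure α) [IsProbabilityMeasure ν] (K : Kernel α β) [IsMarkovKernel K] (v : β) :
    (ν.bind K).real {v} = push (fun u v => (K u).real {v}) (fun u => ν.real {u}) v := by
  rw [measureReal_def, Measure.bind_apply (measurableSet_singleton v) K.aemeasurable,
    lintegral_fintype, ENNReal.toReal_sum (fun u _ => by finiteness)]
  unfold push
  refine Finset.sum_congr rfl fun u _ => ?_
  rw [ENNReal.toReal_mul, mul_comm]; rfl

lemma kl_dpi (ν m : Measure α) [IsProbabilityMeasure ν] [IsProbabilityMeasure m]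
    (K : Kernel α β) [IsMarkovKernel K] : klDiv2 (ν.bind K) (m.bind K) ≤ klDiv2 ν m := by
  by_cases h : ∀ x, m.real {x} = 0 → ν.real {x} = 0
  · rw [klDiv2_fin ν m h, klDiv2_fin]
    · refine ENNReal.ofReal_le_ofReal (div_le_div_of_nonneg_right ?_ (Real.log_nonneg (by norm_num)))
      simp only [bind_real]
      exact dpi (fun _ _ => measureReal_nonneg) (fun u => sum_real_one _)
        (fun _ => measureReal_nonneg) (fun _ => measureReal_nonneg) h
    · intro v
      simp only [bind_real]
      exact push_ac (fun _ _ => measureReal_nonneg) (fun _ => measureReal_nonneg) h v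
  · rw [klDiv2_top ν m h]; exact le_top

lemma etaMax_le_one (K : Kernel α β) [IsMarkovKernel K] : etaMax K ≤ 1 := by
  unfold etaMax eta
  refine iSup_le fun m => iSup_le fun _ => iSup_le fun ν => iSup_le fun _ => iSup_le fun _ => ?_
  refine ENNReal.div_le_of_le_mul ?_
  rw [one_mul]
  exact kl_dpi ν m K

def toM (ν : α → ℝ) : Measure α := ∑ u, ENNReal.ofReal (ν u) • Measure.dirac u

lemma toM_apply (ν : α → ℝ) (x : α) : toM ν {x} = ENNReal.ofReal (ν x) := by
  unfold toM
  rw [Measure.finsetSum_apply, Finset.sum_eq_single x]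
  · simp
  · intro b _ hb
    simp [Set.indicator, hb]
  · simp

lemma toM_real (ν : α → ℝ) (h : ∀ u, 0 ≤ ν u) (x : α) : (toM ν).real {x} = ν x := by
  rw [measureReal_def, toM_apply, ENNReal.toReal_ofReal (h x)]

lemma toM_prob (ν : α → ℝ) (h : ∀ u, 0 ≤ ν u) (h1 : ∑ u, ν u = 1) :
    IsProbabilityMeasure (toM ν) := by
  constructor
  unfold toM
  rw [Measure.finsetSum_apply]
  simp only [Measure.smul_apply, measure_univ, smul_eq_mul, mul_one]
  rw [← ENNReal.ofReal_sum_of_nonneg (fun u _ => h u), h1, ENNReal.ofReal_one]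

lemma sdpi_of_kernel (K : Kernel α β) [IsMarkovKernel K] :
    SDPI (fun u v => (K u).real {v}) (etaMax K).toReal := by
  intro ν m hν hm h1 h2 hac
  have hd := dpi (k := fun u v => (K u).real {v}) (fun _ _ => measureReal_nonneg)
    (fun u => sum_real_one _) hν hm hac
  have hn := KLf_nonneg hν hm h1 h2 hac
  rcases hn.eq_or_lt with h0 | h0
  · rw [← h0] at hd ⊢; simpa using hd
  have := toM_prob ν hν h1
  have := toM_prob m hm h2
  have hne : toM ν ≠ toM m := by
    intro he
    have : ν = m := by
      ext x; rw [← toM_real ν hν, he, toM_real m hm]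
    rw [this] at h0
    simp [KLf] at h0
  have hle : klDiv2 ((toM ν).bind K) ((toM m).bind K) / klDiv2 (toM ν) (toM m) ≤ etaMax K := by
    unfold etaMax eta
    refine le_iSup₂_of_le (toM m) inferInstance ?_
    refine le_iSup₂_of_le (toM ν) inferInstance ?_
    exact le_iSup_of_le hne le_rfl
  have hl : 0 < Real.log 2 := Real.log_pos (by norm_num)
  rw [klDiv2_fin (toM ν) (toM m) (by simpa only [toM_real ν hν, toM_real m hm] using hac),
    klDiv2_fin _ _ (by
      intro v
      simp only [bind_real, toM_real ν hν, toM_real m hm]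
      exact push_ac (fun _ _ => measureReal_nonneg) hm hac v)] at hle
  simp only [bind_real, toM_real ν hν, toM_real m hm] at hle
  rw [← ENNReal.ofReal_div_of_pos (div_pos h0 hl)] at hle
  have h3 := (ENNReal.ofReal_le_iff_le_toReal
    (ne_top_of_le_ne_top ENNReal.one_ne_top (etaMax_le_one K))).1 hle
  rw [div_div_div_cancel_right₀ hl.ne', div_le_iff₀ h0] at h3
  exact h3

lemma miM_compProd (m : Measure α) [IsProbabilityMeasure m] (K : Kernel α β) [IsMarkovKernel K] :
    (miM (m ⊗ₘ K)).toReal = (∑ u, m.real {u} * KLf (fun v => (K u).real {v})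
      (push (fun u v => (K u).real {v}) (fun u => m.real {u}))) / Real.log 2 := by
  have hl : 0 < Real.log 2 := Real.log_pos (by norm_num)
  have hj : ∀ x : α × β, (m ⊗ₘ K).real {x} = m.real {x.1} * (K x.1).real {x.2} := by
    rintro ⟨u, v⟩
    rw [← Set.singleton_prod_singleton, measureReal_def,
      Measure.compProd_apply_prod (measurableSet_singleton _) (measurableSet_singleton _),
      lintegral_singleton, ENNReal.toReal_mul, mul_comm]
    rfl
  have hpr : ∀ x : α × β, (((m ⊗ₘ K).map Prod.fst).prod ((m ⊗ₘ K).map Prod.snd)).real {x} =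
      m.real {x.1} * push (fun u v => (K u).real {v}) (fun u => m.real {u}) x.2 := by
    rintro ⟨u, v⟩
    have e1 : (m ⊗ₘ K).map Prod.fst = m := Measure.fst_compProd m K
    have e2 : (m ⊗ₘ K).map Prod.snd = m.bind K := Measure.snd_compProd m K
    rw [e1, e2, ← Set.singleton_prod_singleton, measureReal_prod_prod, bind_real]
  have hkn : ∀ u v, 0 ≤ (fun u v => (K u).real {v}) u v := fun _ _ => measureReal_nonneg
  have hmn : ∀ u, 0 ≤ (fun u => m.real {u}) u := fun _ => measureReal_nonneg
  have : IsProbabilityMeasure ((m ⊗ₘ K).map Prod.fst) :=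
    Measure.isProbabilityMeasure_map measurable_fst.aemeasurable
  have : IsProbabilityMeasure ((m ⊗ₘ K).map Prod.snd) :=
    Measure.isProbabilityMeasure_map measurable_snd.aemeasurable
  have key : KLf (fun x => (m ⊗ₘ K).real {x})
      (fun x => (((m ⊗ₘ K).map Prod.fst).prod ((m ⊗ₘ K).map Prod.snd)).real {x}) =
      ∑ u, m.real {u} * KLf (fun v => (K u).real {v})
      (push (fun u v => (K u).real {v}) (fun u => m.real {u})) := by
    unfold KLf
    simp only [hj, hpr]
    rw [Fintype.sum_prod_type]
    refine Finset.sum_congr rfl fun u _ => ?_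
    rw [Finset.mul_sum]
    refine Finset.sum_congr rfl fun v _ => ?_
    dsimp only
    by_cases h1 : m.real {u} = 0
    · simp [h1]
    by_cases h2 : (K u).real {v} = 0
    · simp [h2]
    have h3 : push (fun u v => (K u).real {v}) (fun u => m.real {u}) v ≠ 0 := by
      refine (lt_of_lt_of_le ?_ (le_push hkn hmn u v)).ne'
      exact lt_of_le_of_ne (mul_nonneg (hmn u) (hkn u v)) (mul_ne_zero h1 h2).symm
    rw [Real.log_mul h1 h2, Real.log_mul h1 h3]
    ring
  have hac : ∀ x, (((m ⊗ₘ K).map Prod.fst).prod ((m ⊗ₘ K).map Prod.snd)).real {x} = 0 →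
      (m ⊗ₘ K).real {x} = 0 := by
    intro x hx
    rw [hpr] at hx
    rw [hj]
    have := le_push hkn hmn x.1 x.2
    rcases mul_eq_zero.1 hx with h | h
    · rw [h, zero_mul]
    · rw [h] at this
      exact le_antisymm this (mul_nonneg (hmn _) (hkn _ _))
  unfold miM
  rw [klDiv2_fin _ _ hac, ENNReal.toReal_ofReal, key]
  refine div_nonneg (KLf_nonneg (fun _ => measureReal_nonneg) (fun _ => measureReal_nonneg)
    (sum_real_one _) (sum_real_one _) hac) hl.le

lemma capB_of_kernel (K : Kernel α β) [IsMarkovKernel K] :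
    CapB (fun u v => (K u).real {v}) (capacity K * Real.log 2) := by
  intro m hm h1
  have hl : 0 < Real.log 2 := Real.log_pos (by norm_num)
  have := toM_prob m hm h1
  have hb : BddAbove (Set.range fun pp : ProbabilityMeasure α =>
      (miM ((pp : Measure α) ⊗ₘ K)).toReal) := by
    refine ⟨Fintype.card α / Real.log 2, ?_⟩
    rintro _ ⟨pp, rfl⟩
    dsimp only
    rw [miM_compProd]
    exact div_le_div_of_nonneg_right (mi_bdd (fun _ _ => measureReal_nonneg)
      (fun u => sum_real_one _) (fun _ => measureReal_nonneg)) hl.le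
  have h := le_ciSup hb ⟨toM m, this⟩
  have e := miM_compProd (toM m) K
  simp only [toM_real m hm] at e
  rw [← div_le_iff₀ hl, ← e]
  exact h

lemma kernelPi_markov (T : ℕ) (K : Kernel α β) [IsMarkovKernel K] :
    IsMarkovKernel (kernelPi T K) :=
  ⟨fun u => by
    change IsProbabilityMeasure (Measure.pi fun t => K (u t))
    infer_instance⟩

lemma kernelPi_real (T : ℕ) (K : Kernel α β) [IsMarkovKernel K] (u : Fin T → α) (v : Fin T → β) :
    (kernelPi T K u).real {v} = ∏ t, (K (u t)).real {v t} := by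
  change (Measure.pi fun t => K (u t)).real {v} = _
  rw [measureReal_def, Measure.pi_singleton, ENNReal.toReal_prod]
  rfl

end klfin

section core
variable {S υ : Type*} [Fintype S]

lemma Ent_unif {d : ℕ} {p : S → ℝ} (W : S → Fin d → Bool) (h : ∀ w, Pr p W w = (1 / 2) ^ d) :
    Ent p W = d * Real.log 2 := by
  rw [Ent_eq]
  simp only [h, Finset.sum_const, Finset.card_univ, Fintype.card_fun, Fintype.card_bool,
    Fintype.card_fin, nsmul_eq_mul, Real.negMulLog]
  rw [Real.log_pow, one_div, Real.log_inv]
  push_cast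
  have : (2:ℝ) ^ d * (2⁻¹) ^ d = 1 := by rw [← mul_pow]; norm_num
  linear_combination (d * Real.log 2) * this

lemma bscR_symm (ε : ℝ) (x w : Bool) : bscR ε x w = bscR ε w x := by
  unfold bscR; simp only [eq_comm]

lemma bsc_prod_sum {d : ℕ} (ε : ℝ) (w : Fin d → Bool) :
    ∑ x : Fin d → Bool, ∏ i, bscR ε (w i) (x i) = 1 := by
  rw [← Fintype.prod_sum (fun i b => bscR ε (w i) b)]
  refine Finset.prod_eq_one fun i _ => ?_
  rw [Fintype.sum_bool]
  unfold bscR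
  cases w i <;> simp

lemma core [Fintype β] [Nonempty β] [Fintype υ] {d b : ℕ} (hd : 0 < d) {p : S → ℝ}
    (hp : ∀ s, 0 ≤ p s) (h1 : ∑ s, p s = 1)
    {δ : ℝ} (hδ0 : 0 ≤ δ) (hδ1 : δ ≤ 1)
    (W X : S → Fin d → Bool) (Q : (Fin d → Bool) → Fin (2 ^ b)) (V : ℕ → S → β) (U : ℕ → S → υ) (T : ℕ)
    (φ : (t : ℕ) → Fin (2 ^ b) → (Fin t → β) → υ) (k : υ → β → ℝ) (hk : ∀ u, ∑ v, k u v = 1)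
    (hWX : ∀ w x, Pr p (fun s => (W s, X s)) (w, x) =
      (1 / 2) ^ d * ∏ i, bscR ((1 - δ) / 2) (w i) (x i))
    (hU : ∀ t < T, ∀ s, U t s = φ t (Q (X s)) (fun i : Fin t => V i s))
    (hCh : ∀ t < T, IsCh p (fun s => ((W s, X s, fun i : Fin t => V i s), U t s)) (V t)
      (fun c b => k c.2 b))
    (ψ : (Fin T → β) → Fin d → Bool) (cap : ℝ) (hC : CapB k cap) (ηT : ℝ)
    (hη : (∃ η, 0 ≤ η ∧ η ≤ 1 ∧ SDPI k η ∧ ηT = 1 - (1 - η) ^ T) ∨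
      ((∀ t y v v', φ t y v = φ t y v') ∧ 0 ≤ ηT ∧
        SDPI (fun (u : Fin T → υ) (v : Fin T → β) => ∏ t, k (u t) (v t)) ηT)) :
    let e := ∑ s, p s *
        (((Finset.univ.filter fun j : Fin d => W s j ≠ ψ (fun t : Fin T => V t s) j).card : ℝ) / d)
    d * (Real.log 2 - Real.binEntropy e) ≤ d * (Real.log 2 - Real.binEntropy ((1 - δ) / 2)) * ηT ∧
    d * (Real.log 2 - Real.binEntropy e) ≤ δ ^ 2 * (b * Real.log 2) * ηT ∧
    d * (Real.log 2 - Real.binEntropy e) ≤ δ ^ 2 * (T * cap) := by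
  intro e
  have hPW : ∀ w, Pr p W w = (1 / 2) ^ d := by
    intro w
    rw [Pr_marg p W X w]
    simp only [hWX]
    rw [← Finset.mul_sum, bsc_prod_sum, mul_one]
  have hPX : ∀ x, Pr p X x = (1 / 2) ^ d := by
    intro x
    rw [Pr_marg' p X W x]
    simp only [hWX]
    rw [← Finset.mul_sum]
    simp only [bscR_symm _ _ (x _)]
    rw [bsc_prod_sum, mul_one]
  have hEW := Ent_unif W hPW
  have hEX := Ent_unif X hPX
  have hB : IsCh p X W (fun c w => ∏ i, bscR ((1 - δ) / 2) (c i) (w i)) := by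
    intro x w
    have : Pr p (fun s => (X s, W s)) (x, w) = Pr p (fun s => (W s, X s)) (w, x) := by
      refine Finset.sum_congr rfl fun s _ => ?_
      congr 1
      simp only [Prod.mk.injEq]
      exact propext (by tauto)
    rw [this, hWX, hPX]
    congr 1
    exact Finset.prod_congr rfl fun i _ => bscR_symm _ _ _
  have hR := reverse_ch W X Q V U T φ k _ hU hCh hB
  have hF := fano hd hp h1 (fun s => fun t : Fin T => V t s) W ψ
  change _ ≤ d * Real.binEntropy e at hF
  have sw1 : Ent p (fun s => ((fun t : Fin T => V t s), W s)) =
      Ent p (fun s => (W s, fun t : Fin T => V t s)) :=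
    Ent_congr _ _ _ (by intro s s'; rw [Prod.mk.injEq, Prod.mk.injEq]; tauto)
  have sw2 : Ent p (fun s => ((fun t : Fin T => V t s), X s)) =
      Ent p (fun s => (X s, fun t : Fin T => V t s)) :=
    Ent_congr _ _ _ (by intro s s'; rw [Prod.mk.injEq, Prod.mk.injEq]; tauto)
  have sw3 : Ent p (fun s => (Q (X s), W s)) = Ent p (fun s => (W s, Q (X s))) :=
    Ent_congr _ _ _ (by intro s s'; rw [Prod.mk.injEq, Prod.mk.injEq]; tauto)
  have sw4 : Ent p (fun s => (Q (X s), X s)) = Ent p X :=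
    Ent_congr _ _ _ (by
      intro s s'; rw [Prod.mk.injEq]; exact ⟨fun h => h.2, fun h => ⟨by rw [h], h⟩⟩)
  have sw5 : Ent p (fun s => (X s, Q (X s))) = Ent p X :=
    Ent_congr _ _ _ (by
      intro s s'; rw [Prod.mk.injEq]; exact ⟨fun h => h.1, fun h => ⟨h, by rw [h]⟩⟩)
  have sw6 : Ent p (fun s => (W s, X s, Q (X s))) = Ent p (fun s => (X s, W s)) :=
    Ent_congr _ _ _ (by
      intro s s'; simp only [Prod.mk.injEq]
      exact ⟨fun h => ⟨h.2.1, h.1⟩, fun h => ⟨h.2, h.1, by rw [h.1]⟩⟩)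
  have hc1 := contraction hp h1 hδ0 hδ1 _ X W hR
  have hc2 := capacity_bound hp h1 W X Q V U T φ k hk hU hCh cap hC
  have hc3 := contraction hp h1 hδ0 hδ1 (fun s => Q (X s)) X W
    (hB.coarsen (fun x => (x, Q x)) (fun c w => ∏ i, bscR ((1 - δ) / 2) (c.1 i) (w i))
      (fun _ _ => rfl))
  have hc4 := entBSC h1 X (fun x => x) W hB
  have hc5 := submod hp W X (fun s => Q (X s))
  have hc6 := Ent_le_log_card hp h1 (fun s => Q (X s))
  rw [Fintype.card_fin] at hc6
  push_cast at hc6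
  rw [Real.log_pow] at hc6
  rw [sw1] at hF
  rw [sw1, sw2] at hc1
  rw [sw3, sw4, hEX] at hc3
  rw [sw6, sw5] at hc5
  have hd2 : 0 ≤ δ ^ 2 := by positivity
  have hI : 0 ≤ ηT ∧ Ent p W + Ent p (fun s => fun i : Fin T => V i s)
      - Ent p (fun s => (W s, fun i : Fin T => V i s))
      ≤ ηT * (Ent p W + Ent p (fun s => Q (X s)) - Ent p (fun s => (W s, Q (X s)))) := by
    rcases hη with ⟨η, h0, h1', hS, rfl⟩ | ⟨hfb, h0, hS⟩
    · refine ⟨?_, feedback_bound hp h1 W X Q V U T φ k hk hU hCh η h0 h1' hS⟩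
      have := pow_le_one₀ (n := T) (sub_nonneg.2 h1') (by linarith : 1 - η ≤ 1)
      linarith
    · refine ⟨h0, nofb_bound hp h1 W X Q V U T (fun t y => φ t y fun _ => Classical.arbitrary β) k
        (fun t ht s => ?_) hCh ηT h0 hS⟩
      rw [hU t ht s]; exact hfb _ _ _ _
  obtain ⟨hη0, hI⟩ := hI
  rw [hEW] at hI
  have hY1 : d * Real.log 2 + Ent p (fun s => Q (X s)) - Ent p (fun s => (W s, Q (X s))) ≤
      d * (Real.log 2 - Real.binEntropy ((1 - δ) / 2)) := by
    rw [mul_sub]; linarith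
  have hY2 : d * Real.log 2 + Ent p (fun s => Q (X s)) - Ent p (fun s => (W s, Q (X s))) ≤
      δ ^ 2 * (b * Real.log 2) := by
    have := mul_le_mul_of_nonneg_left hc6 hd2
    nlinarith
  have a1 := mul_le_mul_of_nonneg_left hY1 hη0
  have a2 := mul_le_mul_of_nonneg_left hY2 hη0
  have a3 := mul_le_mul_of_nonneg_left hc2 hd2
  rw [mul_sub (d:ℝ) (Real.log 2) (Real.binEntropy e)]
  refine ⟨by linarith, by linarith, ?_⟩
  rw [hEX] at a3
  have : δ ^ 2 * (d * Real.log 2 - (Ent p (fun s => (X s, fun t : Fin T => V t s)) -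
    Ent p (fun s => fun t : Fin T => V t s))) = δ ^ 2 * (d * Real.log 2 +
      Ent p (fun s => fun t : Fin T => V t s) - Ent p (fun s => (X s, fun t : Fin T => V t s))) := by
    ring
  linarith

end core

section link

lemma condD [MeasurableSpace Ω] [MeasurableSpace α] [MeasurableSpace β] [Fintype α] [Fintype β]
    [MeasurableSingletonClass α] [MeasurableSingletonClass β] [Nonempty β]
    (μ : Measure Ω) [IsProbabilityMeasure μ] (Z : Ω → α) (Y : Ω → β) (hZ : Measurable Z)
    (hY : Measurable Y) (κ : α → Measure β)
    (h : ∀ᵐ z ∂(μ.map Z), condDistrib Y Z μ z = κ z) (z : α) (y : β) :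
    μ.real {ω | (Z ω, Y ω) = (z, y)} = μ.real {ω | Z ω = z} * (κ z).real {y} := by
  have e : (μ.map Z) ⊗ₘ condDistrib Y Z μ = μ.map fun a => (Z a, Y a) :=
    compProd_map_condDistrib hY.aemeasurable
  have e2 := congrArg (fun m => m {(z, y)}) e
  rw [Measure.map_apply (hZ.prodMk hY) (measurableSet_singleton _), ← Set.singleton_prod_singleton,
    Measure.compProd_apply_prod (measurableSet_singleton _) (measurableSet_singleton _),
    lintegral_singleton, Measure.map_apply hZ (measurableSet_singleton _),
    Set.singleton_prod_singleton] at e2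
  have e3 : (μ (Z ⁻¹' {z})).toReal * (condDistrib Y Z μ z).real {y} =
      μ.real {ω | (Z ω, Y ω) = (z, y)} := by
    rw [measureReal_def, measureReal_def, ← ENNReal.toReal_mul, mul_comm, e2]
    rfl
  rw [← e3]
  change μ.real {ω | Z ω = z} * _ = _
  by_cases hz : μ (Z ⁻¹' {z}) = 0
  · have : μ.real {ω | Z ω = z} = 0 := by
      rw [measureReal_def]; change (μ (Z ⁻¹' {z})).toReal = 0; simp [hz]
    rw [this]; simp
  · congr 2
    rw [ae_iff, Measure.map_apply hZ (Set.toFinite _).measurableSet] at h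
    by_contra hne
    apply hz
    refine measure_mono_null ?_ h
    intro ω hω
    simp only [Set.mem_preimage, Set.mem_singleton_iff] at hω
    simp only [Set.mem_preimage, Set.mem_ofPred_eq, hω]
    exact hne

variable {S : Type*} [Fintype S]

lemma Pr_link [MeasurableSpace Ω] [MeasurableSpace S] [MeasurableSingletonClass S] (μ : Measure Ω)
    [IsProbabilityMeasure μ] (Z : Ω → S) (hZ : Measurable Z) (f : S → α) (a : α) :
    Pr (fun s => μ.real (Z ⁻¹' {s})) f a = μ.real {ω | f (Z ω) = a} := by
  have : {ω | f (Z ω) = a} = ⋃ s ∈ (Finset.univ.filter fun s => f s = a), Z ⁻¹' {s} := by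
    ext ω; simp
  rw [this, measureReal_biUnion_finset]
  · rw [Finset.sum_filter]; rfl
  · intro s _ s' _ hne
    exact Disjoint.preimage _ (by simpa using hne)
  · intro s _; exact hZ (measurableSet_singleton s)

lemma integral_link [MeasurableSpace Ω] [MeasurableSpace S] [MeasurableSingletonClass S] (μ : Measure Ω)
    [IsProbabilityMeasure μ] (Z : Ω → S) (hZ : Measurable Z) (f : S → ℝ) :
    ∫ ω, f (Z ω) ∂μ = ∑ s, μ.real (Z ⁻¹' {s}) * f s := by
  rw [← integral_map (φ := Z) hZ.aemeasurable (f := f)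
    (measurable_of_countable f).aestronglyMeasurable, integral_fintype]
  · refine Finset.sum_congr rfl fun s _ => ?_
    rw [map_measureReal_apply hZ (measurableSet_singleton s), smul_eq_mul]
  · have : IsProbabilityMeasure (μ.map Z) := Measure.isProbabilityMeasure_map hZ.aemeasurable
    exact Integrable.of_finite

lemma bern_real (x : Bool) : (bern (1 / 2)).real {x} = 1 / 2 := by
  rw [measureReal_def]
  unfold bern
  cases x <;> simp [Set.indicator] <;> norm_num

lemma bern_prob : IsProbabilityMeasure (bern (1 / 2)) := by
  constructor
  unfold bern
  simp only [Measure.add_apply, Measure.smul_apply, measure_univ, smul_eq_mul, mul_one]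
  rw [← ENNReal.ofReal_add] <;> norm_num

lemma bsc_real {ε : ℝ} (h0 : 0 ≤ ε) (h1 : ε ≤ 1) (w x : Bool) :
    (bsc ε w).real {x} = bscR ε w x := by
  change ((ENNReal.ofReal ε) • Measure.dirac (!w) + (ENNReal.ofReal (1 - ε)) • Measure.dirac w
    : Measure Bool).real {x} = _
  rw [measureReal_def]
  unfold bscR
  cases x <;> cases w <;> simp [Set.indicator, h0, h1]

lemma bsc_prob {ε : ℝ} (h0 : 0 ≤ ε) (h1 : ε ≤ 1) (w : Bool) : IsProbabilityMeasure (bsc ε w) := by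
  constructor
  change ((ENNReal.ofReal ε) • Measure.dirac (!w) + (ENNReal.ofReal (1 - ε)) • Measure.dirac w
    : Measure Bool) _ = _
  simp only [Measure.add_apply, Measure.smul_apply, measure_univ, smul_eq_mul, mul_one]
  rw [← ENNReal.ofReal_add h0 (by linarith)]; norm_num

lemma pi_real {d : ℕ} (m : Fin d → Measure Bool) [∀ i, IsProbabilityMeasure (m i)]
    (x : Fin d → Bool) : (Measure.pi m).real {x} = ∏ i, (m i).real {x i} := by
  rw [measureReal_def, Measure.pi_singleton, ENNReal.toReal_prod]
  rfl

lemma binEnt_eq (p : ℝ) : binEnt p = Real.binEntropy p / Real.log 2 := by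
  rw [binEnt, Real.binEntropy_eq_negMulLog_add_negMulLog_one_sub]

lemma binEntInv_le {y e : ℝ} (he0 : 0 ≤ e) (hy : y ≤ binEnt e) : binEntInv y ≤ e := by
  have hl : 0 < Real.log 2 := Real.log_pos (by norm_num)
  refine Real.sSup_le ?_ he0
  rintro q ⟨⟨hq0, hq1⟩, hq⟩
  by_contra hlt
  push Not at hlt
  have := Real.binEntropy_strictMonoOn (a := e) (b := q) ⟨he0, by norm_num at *; linarith⟩
    ⟨hq0, by norm_num at *; linarith⟩ hlt
  have h2 := hq.trans hy
  rw [binEnt_eq, binEnt_eq, div_le_div_iff_of_pos_right hl] at h2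
  linarith

end link

/-- Corollary 6. In the setting of Corollary 5 with average bit-error
distortion `ℓ(w, ŵ) = (1/d) Σ_j 1{w_j ≠ ŵ_j}`, every protocol (quantizer, encoder, estimator)
satisfies `E[ℓ(W, Ŵ)] ≥ h₂⁻¹(1 − (1/d) min{d(1 − h₂((1−δ)/2)) η_T, δ² b η_T, δ² C T})`
(provided the argument of `h₂⁻¹` lies in `[0,1]`), hence the same bound holds for the Bayes
risk; moreover, achieving average bit-error probability at most `p ∈ [0, 1/2]` forces
`b/d ≥ (1 − h₂(p))/(δ² η_T)` with `η_T = 1 − (1 − η(K))^T`. -/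
theorem discrete_param_bayes_risk_and_rate_bounds
    {Ω U' V' : Type*} [MeasurableSpace Ω]
    [MeasurableSpace U'] [Fintype U'] [MeasurableSingletonClass U'] [Nonempty U']
    [MeasurableSpace V'] [Fintype V'] [MeasurableSingletonClass V'] [Nonempty V']
    (μ : Measure Ω) [IsProbabilityMeasure μ]
    (K : Kernel U' V') [IsMarkovKernel K]
    (d b T : ℕ) (hd : 0 < d) (δ : ℝ) (hδ0 : 0 ≤ δ) (hδ1 : δ ≤ 1)
    (W X : Ω → Fin d → Bool) (U : ℕ → Ω → U') (V : ℕ → Ω → V')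
    (hW : Measurable W) (hX : Measurable X)
    (hU : ∀ t, Measurable (U t)) (hV : ∀ t, Measurable (V t))
    (hPrior : μ.map W = Measure.pi fun _ : Fin d => bern (1 / 2))
    (hSample : ∀ᵐ w ∂(μ.map W),
      condDistrib X W μ w = Measure.pi fun j : Fin d => bsc ((1 - δ) / 2) (w j))
    (φQ : (Fin d → Bool) → Fin (2 ^ b))
    (φE : (t : ℕ) → Fin (2 ^ b) → (Fin t → V') → U')
    (hEnc : ∀ t, t < T → ∀ ω, U t ω = φE t (φQ (X ω)) fun s : Fin t => V s ω)
    (hChannel : ∀ t, t < T →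
      ∀ᵐ p ∂(μ.map fun ω => ((W ω, X ω, fun s : Fin t => V s ω), U t ω)),
        condDistrib (V t) (fun ω => ((W ω, X ω, fun s : Fin t => V s ω), U t ω)) μ p = K p.2)
    (ψ : (Fin T → V') → Fin d → Bool) :
    (∀ ηT : ℝ,
      (ηT = 1 - (1 - (etaMax K).toReal) ^ T ∨
        ((∀ t y v v', φE t y v = φE t y v') ∧ ηT = (etaMax (kernelPi T K)).toReal)) →
      0 ≤ 1 - (1 / (d : ℝ)) * min ((d : ℝ) * (1 - binEnt ((1 - δ) / 2)) * ηT)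
            (min (δ ^ 2 * b * ηT) (δ ^ 2 * capacity K * T)) →
      1 - (1 / (d : ℝ)) * min ((d : ℝ) * (1 - binEnt ((1 - δ) / 2)) * ηT)
            (min (δ ^ 2 * b * ηT) (δ ^ 2 * capacity K * T)) ≤ 1 →
      binEntInv (1 - (1 / (d : ℝ)) * min ((d : ℝ) * (1 - binEnt ((1 - δ) / 2)) * ηT)
            (min (δ ^ 2 * b * ηT) (δ ^ 2 * capacity K * T))) ≤
        ∫ ω, ((Finset.univ.filter fun j : Fin d =>
            W ω j ≠ ψ (fun t : Fin T => V t ω) j).card : ℝ) / d ∂μ) ∧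
    (∀ p : ℝ, 0 ≤ p → p ≤ 1 / 2 →
      (∫ ω, ((Finset.univ.filter fun j : Fin d =>
          W ω j ≠ ψ (fun t : Fin T => V t ω) j).card : ℝ) / d ∂μ) ≤ p →
      (1 - binEnt p) / (δ ^ 2 * (1 - (1 - (etaMax K).toReal) ^ T)) ≤ (b : ℝ) / d) := by
  have hl : 0 < Real.log 2 := Real.log_pos (by norm_num)
  have hdR : (0:ℝ) < d := by exact_mod_cast hd
  have hε0 : 0 ≤ (1 - δ) / 2 := by linarith
  have hε1 : (1 - δ) / 2 ≤ 1 := by linarith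
  let Z : Ω → (Fin d → Bool) × (Fin d → Bool) × (Fin T → V') :=
    fun ω => (W ω, X ω, fun t : Fin T => V t ω)
  have hZ : Measurable Z :=
    hW.prodMk (hX.prodMk (measurable_pi_iff.2 fun t : Fin T => hV t))
  let p : (Fin d → Bool) × (Fin d → Bool) × (Fin T → V') → ℝ := fun s => μ.real (Z ⁻¹' {s})
  let Vs : ℕ → (Fin d → Bool) × (Fin d → Bool) × (Fin T → V') → V' :=
    fun t s => if h : t < T then s.2.2 ⟨t, h⟩ else Classical.arbitrary V'
  let Us : ℕ → (Fin d → Bool) × (Fin d → Bool) × (Fin T → V') → U' :=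
    fun t s => φE t (φQ s.2.1) (fun i : Fin t => Vs i s)
  have hp : ∀ s, 0 ≤ p s := fun _ => measureReal_nonneg
  have h1 : ∑ s, p s = 1 := by
    have := integral_link μ Z hZ (fun _ => 1)
    simpa using this.symm
  have hVs : ∀ t < T, ∀ ω, Vs t (Z ω) = V t ω := by
    intro t ht ω
    simp only [Vs, Z, dif_pos ht]
  have hVs' : ∀ t ≤ T, ∀ ω, (fun i : Fin t => Vs i (Z ω)) = fun i : Fin t => V i ω := by
    intro t ht ω
    funext i
    exact hVs i (by omega) ω
  have hUs : ∀ t < T, ∀ ω, Us t (Z ω) = U t ω := by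
    intro t ht ω
    rw [hEnc t ht ω]
    simp only [Us, hVs' t ht.le ω, Z]
  have hVsT : ∀ s : (Fin d → Bool) × (Fin d → Bool) × (Fin T → V'),
      (fun t : Fin T => Vs t s) = s.2.2 := by
    intro s; funext t; simp [Vs]
  have hCh : ∀ t < T, IsCh p (fun s => ((s.1, s.2.1, fun i : Fin t => Vs i s), Us t s)) (Vs t)
      (fun c b => (K c.2).real {b}) := by
    intro t ht c v
    have hm : Measurable (fun ω => ((W ω, X ω, fun s : Fin t => V s ω), U t ω)) :=
      (hW.prodMk (hX.prodMk (measurable_pi_iff.2 fun s : Fin t => hV s))).prodMk (hU t)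
    have := condD μ _ (V t) hm (hV t) (fun c => K c.2) (hChannel t ht) c v
    change Pr (fun s => μ.real (Z ⁻¹' {s})) _ _ = Pr (fun s => μ.real (Z ⁻¹' {s})) _ _ * _
    rw [Pr_link μ Z hZ, Pr_link μ Z hZ]
    simp only [hVs' t ht.le, hVs t ht, hUs t ht]
    exact this
  have hWX : ∀ w x, Pr p (fun s => (s.1, s.2.1)) (w, x) =
      (1 / 2) ^ d * ∏ i, bscR ((1 - δ) / 2) (w i) (x i) := by
    intro w x
    have := condD μ W X hW hX _ hSample w x
    change Pr (fun s => μ.real (Z ⁻¹' {s})) _ _ = _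
    rw [Pr_link μ Z hZ]
    have hb := bern_prob
    have hb2 := bsc_prob hε0 hε1
    rw [pi_real] at this
    have e : μ.real {ω | W ω = w} = (1 / 2) ^ d := by
      have e1 : μ.real {ω | W ω = w} = (μ.map W).real {w} := by
        rw [map_measureReal_apply hW (measurableSet_singleton w)]; rfl
      rw [e1, hPrior, pi_real]
      simp only [bern_real]
      simp
    rw [e] at this
    simp only [bsc_real hε0 hε1] at this
    exact this
  have hrisk : (∫ ω, ((Finset.univ.filter fun j : Fin d =>
          W ω j ≠ ψ (fun t : Fin T => V t ω) j).card : ℝ) / d ∂μ) =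
      ∑ s, p s * (((Finset.univ.filter fun j : Fin d =>
        s.1 j ≠ ψ (fun t : Fin T => Vs t s) j).card : ℝ) / d) := by
    simp only [hVsT]
    exact integral_link μ Z hZ (fun s => ((Finset.univ.filter fun j : Fin d =>
        s.1 j ≠ ψ s.2.2 j).card : ℝ) / d)
  have hkP := kernelPi_markov T K
  have hη1 : (etaMax K).toReal ≤ 1 := by
    have := ENNReal.toReal_mono ENNReal.one_ne_top (etaMax_le_one K)
    simpa using this
  have hcore := fun ηT hη => core (b := b) hd hp h1 hδ0 hδ1 (fun s => s.1) (fun s => s.2.1) φQ Vs Us T φE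
    (fun u v => (K u).real {v}) (fun u => sum_real_one (K u)) hWX (fun t ht s => rfl) hCh ψ
    (capacity K * Real.log 2) (capB_of_kernel K) ηT hη
  dsimp only at hcore
  rw [← hrisk] at hcore
  set e := ∫ ω, ((Finset.univ.filter fun j : Fin d =>
          W ω j ≠ ψ (fun t : Fin T => V t ω) j).card : ℝ) / d ∂μ with he
  have he0 : 0 ≤ e := integral_nonneg fun ω => by positivity
  refine ⟨fun ηT hηT _ _ => binEntInv_le he0 ?_, fun q hq0 hq1 hle => ?_⟩
  · have hc := hcore ηT (by
      rcases hηT with h | ⟨h, h'⟩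
      · exact Or.inl ⟨_, ENNReal.toReal_nonneg, hη1, sdpi_of_kernel K, h⟩
      · refine Or.inr ⟨h, by rw [h']; exact ENNReal.toReal_nonneg, ?_⟩
        have := sdpi_of_kernel (kernelPi T K)
        simp only [kernelPi_real] at this
        rw [h']; exact this)
    obtain ⟨c1, c2, c3⟩ := hc
    have hmin : d * (1 - binEnt e) ≤ min ((d : ℝ) * (1 - binEnt ((1 - δ) / 2)) * ηT)
            (min (δ ^ 2 * b * ηT) (δ ^ 2 * capacity K * T)) := by
      have hb : ∀ x, Real.binEntropy x = binEnt x * Real.log 2 := fun x => by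
        rw [binEnt_eq, div_mul_cancel₀ _ hl.ne']
      rw [hb e] at c1 c2 c3
      rw [hb] at c1
      refine le_min ?_ (le_min ?_ ?_) <;> refine le_of_mul_le_mul_right ?_ hl
      · linarith
      · linarith
      · linarith
    have : 1 - binEnt e ≤ 1 / (d:ℝ) * min ((d : ℝ) * (1 - binEnt ((1 - δ) / 2)) * ηT)
            (min (δ ^ 2 * b * ηT) (δ ^ 2 * capacity K * T)) := by
      rw [one_div, ← div_eq_inv_mul, le_div_iff₀ hdR]
      linarith
    linarith
  · obtain ⟨-, c2, -⟩ := hcore _ (Or.inl ⟨_, ENNReal.toReal_nonneg, hη1, sdpi_of_kernel K, rfl⟩)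
    have hmono : Real.binEntropy e ≤ Real.binEntropy q :=
      Real.binEntropy_strictMonoOn.monotoneOn ⟨he0, by norm_num at *; linarith⟩
        ⟨hq0, by norm_num at *; linarith⟩ hle
    have hηn : 0 ≤ 1 - (1 - (etaMax K).toReal) ^ T := by
      have h0 : 0 ≤ (etaMax K).toReal := ENNReal.toReal_nonneg
      have := pow_le_one₀ (n := T) (sub_nonneg.2 hη1) (by linarith : 1 - (etaMax K).toReal ≤ 1)
      linarith
    rcases (mul_nonneg (sq_nonneg δ) hηn).eq_or_lt with h0 | h0
    · rw [← h0, div_zero]; positivity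
    rw [div_le_div_iff₀ h0 hdR]
    refine le_of_mul_le_mul_right ?_ hl
    have hb : Real.binEntropy q = binEnt q * Real.log 2 := by
      rw [binEnt_eq, div_mul_cancel₀ _ hl.ne']
    have := mul_le_mul_of_nonneg_left hmono hdR.le
    rw [hb] at this
    linarith




end DecEst
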